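/- If T is a complete first-order theory with |T| < λ and T has SOP₃, then T is ⊲*_λ-maximal. -/

import Mathlib

open FirstOrder FirstOrder.Language Cardinal

namespace SopPaper

/-- A first-order formula with parameters from `M`, in free variables indexed by `Fin m`. -/
structure ParamFormula (L : FirstOrder.Language.{0, 0}) (M : Type*) [L.Structure M] (m : ℕ) where
  k : ℕ
  toFormula : L.Formula (Fin m ⊕ Fin k)
  par : Fin k → M

/-- Realization of a formula with parameters at a tuple `e`. -/
def ParamFormula.Realize {L : FirstOrder.Language.{0, 0}} {M : Type*} [L.Structure M] {m : ℕ}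
    (ψ : ParamFormula L M m) (e : Fin m → M) : Prop :=
  ψ.toFormula.Realize (Sum.elim e ψ.par)

/-- `N` is a `lam`-saturated `L`-structure: every 1-type over a parameter set of
cardinality `< lam` which is finitely satisfiable in `N` is realized in `N`. -/
def IsSaturatedAt (L : FirstOrder.Language.{0, 0}) (N : Type) (S : L.Structure N)
    (lam : Cardinal.{0}) : Prop :=
  ∀ A : Set N, #A < lam →
    ∀ p : Set (@ParamFormula L N S 1),
      (∀ ψ ∈ p, ∀ j, ψ.par j ∈ A) →
      (∀ s : Finset (@ParamFormula L N S 1), ↑s ⊆ p →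
        ∃ e : Fin 1 → N, ∀ ψ ∈ s, ψ.Realize e) →
      ∃ e : Fin 1 → N, ∀ ψ ∈ p, ψ.Realize e

/-- An interpretation (syntactic data) of the language `L₁` in the language `L₀`:
a dimension, a domain formula, an equality formula, and formulas interpreting each
relation symbol and (the graph of) each function symbol. -/
structure Interpretation (L₀ L₁ : FirstOrder.Language.{0, 0}) where
  d : ℕ
  dom : L₀.Formula (Fin d)
  eqf : L₀.Formula (Fin d ⊕ Fin d)
  rel : ∀ n, L₁.Relations n → L₀.Formula (Fin n × Fin d)
  func : ∀ n, L₁.Functions n → L₀.Formula ((Fin n × Fin d) ⊕ Fin d)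

variable {L₀ L₁ L₂ : FirstOrder.Language.{0, 0}}

/-- The domain of the interpretation `I` in an `L₀`-structure `M`. -/
def Interpretation.Dom (I : Interpretation L₀ L₁) (M : Type) [L₀.Structure M] : Type :=
  {a : Fin I.d → M // I.dom.Realize a}

/-- The `L₁`-structure `N` is (isomorphic to) the model `M^[I]` interpreted by `I` inside the
`L₀`-structure `M`, as witnessed by the projection `g` from the domain of `I` in `M` onto `N`. -/
def Interpretation.Represents (I : Interpretation L₀ L₁) (M : Type) [L₀.Structure M]
    (N : Type) (S : L₁.Structure N) (g : I.Dom M → N) : Prop :=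
  Function.Surjective g ∧
  (∀ a b : I.Dom M, g a = g b ↔ I.eqf.Realize (Sum.elim a.1 b.1)) ∧
  (∀ (n : ℕ) (r : L₁.Relations n) (f : Fin n → I.Dom M),
      S.RelMap r (fun i => g (f i)) ↔ (I.rel n r).Realize fun p => (f p.1).1 p.2) ∧
  (∀ (n : ℕ) (F : L₁.Functions n) (f : Fin n → I.Dom M) (b : I.Dom M),
      S.funMap F (fun i => g (f i)) = g b ↔
        (I.func n F).Realize (Sum.elim (fun p => (f p.1).1 p.2) b.1))

/-- `I` is an interpretation of the theory `T₁` in the theory `T₀`: in every model of `T₀`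
the interpreted structure exists and is a model of `T₁`. -/
def Interpretation.InterpretsIn (I : Interpretation L₀ L₁) (T₀ : L₀.Theory)
    (T₁ : L₁.Theory) : Prop :=
  ∀ M : Theory.ModelType.{0, 0, 0} T₀,
    ∃ (N : Theory.ModelType.{0, 0, 0} T₁) (g : I.Dom M → N),
      I.Represents M N inferInstance g

/-- The cardinality of a theory (together with its language), `|T|`. -/
def theoryCard {L : FirstOrder.Language.{0, 0}} (T : L.Theory) : Cardinal.{0} :=
  L.card + #T + ℵ₀

/-- Any model of `T₁` and any model of `T₂` occur (up to elementary equivalence) jointly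
interpreted in a single model of `T₀`; this is the extra demand made on the witnessing theory
when `T₁`, `T₂` are not necessarily complete. -/
def JointModels (T₀ : L₀.Theory) (T₁ : L₁.Theory) (T₂ : L₂.Theory)
    (I₁ : Interpretation L₀ L₁) (I₂ : Interpretation L₀ L₂) : Prop :=
  ∀ (A₁ : Theory.ModelType.{0, 0, 0} T₁) (A₂ : Theory.ModelType.{0, 0, 0} T₂),
    ∃ (M : Theory.ModelType.{0, 0, 0} T₀) (N₁ : Theory.ModelType.{0, 0, 0} T₁)
      (g₁ : I₁.Dom M → N₁) (N₂ : Theory.ModelType.{0, 0, 0} T₂) (g₂ : I₂.Dom M → N₂),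
      I₁.Represents M N₁ inferInstance g₁ ∧ I₂.Represents M N₂ inferInstance g₂ ∧
      (N₁ ≅[L₁] A₁) ∧ (N₂ ≅[L₂] A₂)

/-- The saturation-transfer property: whenever `M ⊨ T₀` is `kap`-saturated (no demand when
`kap = 0`) and the interpreted model `M^[I₂]` is `lam`-saturated, the interpreted model
`M^[I₁]` is `mu`-saturated. -/
def TransferClause (T₀ : L₀.Theory) (I₁ : Interpretation L₀ L₁) (I₂ : Interpretation L₀ L₂)
    (lam mu kap : Cardinal.{0}) : Prop :=
  ∀ M : Theory.ModelType.{0, 0, 0} T₀,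
    (kap = 0 ∨ IsSaturatedAt L₀ M inferInstance kap) →
    ∀ (N₁ : Type) (S₁ : L₁.Structure N₁) (g₁ : I₁.Dom M → N₁)
      (N₂ : Type) (S₂ : L₂.Structure N₂) (g₂ : I₂.Dom M → N₂),
      I₁.Represents M N₁ S₁ g₁ → I₂.Represents M N₂ S₂ g₂ →
      IsSaturatedAt L₂ N₂ S₂ lam → IsSaturatedAt L₁ N₁ S₁ mu

/-- `T₁ ⊲*_{λ,μ,κ} T₂`. -/
def TriangleStar (T₁ : L₁.Theory) (T₂ : L₂.Theory) (lam mu kap : Cardinal.{0}) : Prop :=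
  ∃ (L₀ : FirstOrder.Language.{0, 0}) (T₀ : L₀.Theory)
    (I₁ : Interpretation L₀ L₁) (I₂ : Interpretation L₀ L₂),
    theoryCard T₀ ≤ theoryCard T₁ + theoryCard T₂ ∧
    I₁.InterpretsIn T₀ T₁ ∧ I₂.InterpretsIn T₀ T₂ ∧
    JointModels T₀ T₁ T₂ I₁ I₂ ∧
    TransferClause T₀ I₁ I₂ lam mu kap

/-- `T` is `⊲*_λ`-maximal: `T' ⊲*_λ T` for every theory `T'` with `|T'| < λ`. -/
def TriangleStarMaximal {L : FirstOrder.Language.{0, 0}} (T : L.Theory)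
    (lam : Cardinal.{0}) : Prop :=
  ∀ (L' : FirstOrder.Language.{0, 0}) (T' : L'.Theory), theoryCard T' < lam →
    TriangleStar T' T lam lam 0

/-- The language of trees: a single binary relation `<`. -/
inductive TreeRel : ℕ → Type
  | lt : TreeRel 2

/-- The language of trees. -/
def Ltr : FirstOrder.Language.{0, 0} := ⟨fun _ => Empty, TreeRel⟩

/-- The tree order of an `Ltr`-structure. -/
def treeLt {M : Type*} [Ltr.Structure M] (x y : M) : Prop :=
  Structure.RelMap (L := Ltr) (TreeRel.lt : Ltr.Relations 2) ![x, y]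

/-- `M` is a tree: `<` is a (strict) partial order in which the predecessors of any element
are linearly ordered. -/
def IsTreeStructure (M : Type*) [Ltr.Structure M] : Prop :=
  (∀ x : M, ¬ treeLt x x) ∧
  (∀ x y z : M, treeLt x y → treeLt y z → treeLt x z) ∧
  (∀ x y z : M, treeLt y x → treeLt z x → treeLt y z ∨ treeLt z y ∨ y = z)

/-- The theory of trees: all sentences true in every tree. -/
def Ttr : Ltr.Theory :=
  {σ | ∀ (M : Type) (S : Ltr.Structure M), Nonempty M → @IsTreeStructure M S →
    @Sentence.Realize Ltr M S σ}

/-- `T'` is the model completion of `T`. -/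
def IsModelCompletion {L : FirstOrder.Language.{0, 0}} (T T' : L.Theory) : Prop :=
  (∀ N : Theory.ModelType.{0, 0, 0} T', (N : Type) ⊨ T) ∧
  (∀ M : Theory.ModelType.{0, 0, 0} T, ∃ N : Theory.ModelType.{0, 0, 0} T',
      Nonempty ((M : Type) ↪[L] (N : Type))) ∧
  (∀ (M N : Theory.ModelType.{0, 0, 0} T') (f : (M : Type) ↪[L] (N : Type)) (k : ℕ)
      (ψ : L.Formula (Fin k)) (v : Fin k → M),
      ψ.Realize (f ∘ v) ↔ ψ.Realize v) ∧
  (∀ (A : Theory.ModelType.{0, 0, 0} T) (N₁ N₂ : Theory.ModelType.{0, 0, 0} T')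
      (f₁ : (A : Type) ↪[L] (N₁ : Type)) (f₂ : (A : Type) ↪[L] (N₂ : Type)) (k : ℕ)
      (ψ : L.Formula (Fin k)) (v : Fin k → A),
      ψ.Realize (f₁ ∘ v) ↔ ψ.Realize (f₂ ∘ v))

/-- `⟨a_i : i < ω⟩` is an indiscernible sequence of `m`-tuples in `M`. -/
def Indiscernible {L : FirstOrder.Language.{0, 0}} {M : Type*} [L.Structure M] {m : ℕ}
    (a : ℕ → Fin m → M) : Prop :=
  ∀ (k : ℕ) (ψ : L.Formula (Fin k × Fin m)) (i j : Fin k → ℕ),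
    StrictMono i → StrictMono j →
    (ψ.Realize (fun p => a (i p.1) p.2) ↔ ψ.Realize (fun p => a (j p.1) p.2))

/-- `φ(x̄,ȳ)` (with `lg(x̄) = lg(ȳ) = m`) exemplifies SOP₃ in the structure `M`: it defines
on `M` a directed graph with an infinite indiscernible chain and with no cycles of
length `3`. -/
def ExemplifiesSOP3 {L : FirstOrder.Language.{0, 0}} {m : ℕ}
    (φ : L.Formula (Fin m ⊕ Fin m)) (M : Type*) [L.Structure M] : Prop :=
  (∃ a : ℕ → Fin m → M, Indiscernible (L := L) a ∧
      ∀ i j : ℕ, i < j → φ.Realize (Sum.elim (a i) (a j))) ∧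
  ¬ ∃ x₀ x₁ x₂ : Fin m → M,
      φ.Realize (Sum.elim x₀ x₁) ∧ φ.Realize (Sum.elim x₁ x₂) ∧ φ.Realize (Sum.elim x₂ x₀)

section Quotients

/-- The map `h : M → N` presents the `L`-structure `N` as the quotient of (a reduct of) the
`L₀`-structure `M` by the kernel of the unary function `ρ`. -/
structure IsQuotient {L L₀ : FirstOrder.Language.{0, 0}} (ι : L →ᴸ L₀) (ρ : L₀.Functions 1)
    {M N : Type*} [L₀.Structure M] [L.Structure N] (h : M → N) : Prop where
  surjective : Function.Surjective h
  eq_iff : ∀ x y, h x = h y ↔ Structure.funMap ρ ![x] = Structure.funMap ρ ![y]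
  relMap_iff : ∀ {n : ℕ} (R : L.Relations n) (f : Fin n → M),
    Structure.RelMap R (fun i => h (f i)) ↔ Structure.RelMap (ι.onRelation R) f
  map_fun : ∀ {n : ℕ} (F : L.Functions n) (f : Fin n → M),
    h (Structure.funMap (ι.onFunction F) f) = Structure.funMap F (fun i => h (f i))

/-- Translate an `L`-formula along `ι`, reading equality as equality of values of `ρ`. -/
def translate {L L₀ : FirstOrder.Language.{0, 0}} (ι : L →ᴸ L₀) (ρ : L₀.Functions 1) {α : Type} :
    ∀ {n : ℕ}, L.BoundedFormula α n → L₀.BoundedFormula α n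
  | _, .falsum => .falsum
  | _, .equal t s => .equal (ρ.apply₁ (ι.onTerm t)) (ρ.apply₁ (ι.onTerm s))
  | _, .rel R ts => .rel (ι.onRelation R) fun i => ι.onTerm (ts i)
  | _, .imp f g => .imp (translate ι ρ f) (translate ι ρ g)
  | _, .all f => .all (translate ι ρ f)

variable {L L₀ : FirstOrder.Language.{0, 0}} {ι : L →ᴸ L₀} {ρ : L₀.Functions 1}
  {M N : Type*} [L₀.Structure M] [L.Structure N] {h : M → N}

theorem IsQuotient.realize_term (hq : IsQuotient ι ρ h) {α : Type*} (t : L.Term α) (v : α → M) :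
    h ((ι.onTerm t).realize v) = t.realize fun a => h (v a) := by
  induction t with
  | var => rfl
  | func F ts ih =>
    simp only [LHom.onTerm, Term.realize]
    rw [hq.map_fun]
    simp only [ih]

theorem IsQuotient.realize_bounded (hq : IsQuotient ι ρ h) {α : Type} {n : ℕ}
    (ψ : L.BoundedFormula α n) (v : α → M) (xs : Fin n → M) :
    (translate ι ρ ψ).Realize v xs ↔ ψ.Realize (fun a => h (v a)) (fun i => h (xs i)) := by
  have hsum : ∀ {k : ℕ} (xs : Fin k → M), (fun a => h (Sum.elim v xs a)) =
      Sum.elim (fun a => h (v a)) (fun i => h (xs i)) := by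
    intro k xs
    funext a
    cases a <;> rfl
  induction ψ with
  | falsum => rfl
  | equal t s =>
    simp only [translate, BoundedFormula.Realize, Term.realize_functions_apply₁, ← hq.eq_iff,
      hq.realize_term, hsum]
  | rel R ts =>
    simp only [translate, BoundedFormula.Realize, ← hq.relMap_iff, hq.realize_term, hsum]
  | imp f g ihf ihg => simp only [translate, BoundedFormula.Realize, ihf, ihg]
  | all f ih =>
    simp only [translate, BoundedFormula.Realize, ih]
    refine ⟨fun H y => ?_, fun H x => ?_⟩
    · obtain ⟨x, rfl⟩ := hq.surjective y
      convert H x using 1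
      exact (Fin.comp_snoc h xs x).symm
    · convert H (h x) using 1
      exact Fin.comp_snoc h xs x

theorem IsQuotient.realize_formula (hq : IsQuotient ι ρ h) {α : Type}
    (ψ : L.Formula α) (v : α → M) :
    Formula.Realize (translate ι ρ ψ) v ↔ ψ.Realize fun a => h (v a) := by
  rw [Formula.Realize, Formula.Realize, hq.realize_bounded]
  exact iff_of_eq (congrArg _ (Subsingleton.elim _ _))

theorem IsQuotient.realize_sentence (hq : IsQuotient ι ρ h) (σ : L.Sentence) :
    M ⊨ (translate ι ρ σ : L₀.Sentence) ↔ N ⊨ σ := by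
  rw [Sentence.Realize, Sentence.Realize, hq.realize_formula]
  exact iff_of_eq (congrArg _ (Subsingleton.elim _ _))

/-- If `ρ` respects all symbols of `L`, its image is a quotient of `M`. -/
theorem exists_isQuotient (ι : L →ᴸ L₀) (ρ : L₀.Functions 1) (M : Type) [L₀.Structure M]
    (hrel : ∀ {n : ℕ} (R : L.Relations n) (f : Fin n → M),
      Structure.RelMap (ι.onRelation R) f ↔
        Structure.RelMap (ι.onRelation R) fun i => Structure.funMap ρ ![f i])
    (hfun : ∀ {n : ℕ} (F : L.Functions n) (f : Fin n → M),
      Structure.funMap ρ ![Structure.funMap (ι.onFunction F) f] =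
        Structure.funMap ρ
          ![Structure.funMap (ι.onFunction F) fun i => Structure.funMap ρ ![f i] ]) :
    ∃ (N : Type) (_ : L.Structure N) (h : M → N), IsQuotient ι ρ h := by
  let S : L.Structure (Set.range fun x : M => Structure.funMap ρ ![x]) :=
    { funMap := fun F v =>
        ⟨Structure.funMap ρ ![Structure.funMap (ι.onFunction F) fun i => (v i : M)], _, rfl⟩
      RelMap := fun R v => Structure.RelMap (ι.onRelation R) fun i => (v i : M) }
  refine ⟨_, S, fun x => ⟨_, x, rfl⟩, ?_, ?_, ?_, ?_⟩
  · rintro ⟨_, x, rfl⟩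
    exact ⟨x, rfl⟩
  · exact fun x y => Subtype.ext_iff
  · exact fun R f => (hrel R f).symm
  · exact fun F f => Subtype.ext (hfun F f)

/-- The one-dimensional interpretation given by `ι` and `ρ`. -/
def quotientInterpretation (ι : L →ᴸ L₀) (ρ : L₀.Functions 1) : Interpretation L₀ L where
  d := 1
  dom := ⊤
  eqf := (ρ.apply₁ (.var (.inl 0))).equal (ρ.apply₁ (.var (.inr 0)))
  rel _ R := (ι.onRelation R).formula fun i => .var (i, 0)
  func _ F := (ρ.apply₁ (.func (ι.onFunction F) fun i => .var (.inl (i, 0)))).equal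
    (ρ.apply₁ (.var (.inr 0)))

/-- An element, seen in the domain of the one-dimensional interpretation. -/
def toDom (ι : L →ᴸ L₀) (ρ : L₀.Functions 1) {M : Type} [L₀.Structure M] (x : M) :
    (quotientInterpretation ι ρ).Dom M :=
  ⟨fun _ => x, Formula.realize_top.2 trivial⟩

theorem toDom_apply_zero {M : Type} [L₀.Structure M]
    (a : (quotientInterpretation ι ρ).Dom M) : toDom ι ρ (a.1 (0 : Fin 1)) = a :=
  Subtype.ext (funext fun i => congrArg a.1 (Subsingleton.elim (0 : Fin 1) i))

theorem represents_iff_isQuotient {M N : Type} [L₀.Structure M] [S : L.Structure N]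
    (g : (quotientInterpretation ι ρ).Dom M → N) :
    (quotientInterpretation ι ρ).Represents M N S g ↔
      IsQuotient ι ρ fun x : M => g (toDom ι ρ x) := by
  have hsurj : Function.Surjective (toDom ι ρ : M → _) := fun a => ⟨_, toDom_apply_zero a⟩
  have hfs : ∀ {n : ℕ} (f : Fin n → (quotientInterpretation ι ρ).Dom M),
      ∃ f' : Fin n → M, f = fun i => toDom ι ρ (f' i) :=
    fun f => ⟨fun i => (f i).1 (0 : Fin 1), funext fun i => (toDom_apply_zero _).symm⟩
  have heq : ∀ x y : M, (quotientInterpretation ι ρ).eqf.Realize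
      (Sum.elim (toDom ι ρ x).1 (toDom ι ρ y).1) ↔
        Structure.funMap ρ ![x] = Structure.funMap ρ ![y] := by
    intro x y
    simp only [quotientInterpretation, Formula.realize_equal, Term.realize_functions_apply₁]
    rfl
  have hr : ∀ {n : ℕ} (R : L.Relations n) (f : Fin n → M),
      ((quotientInterpretation ι ρ).rel n R).Realize (fun p => (toDom ι ρ (f p.1)).1 p.2) ↔
        Structure.RelMap (ι.onRelation R) f := by
    intro n R f
    simp only [quotientInterpretation, Formula.realize_rel]
    rfl
  have hF : ∀ {n : ℕ} (F : L.Functions n) (f : Fin n → M) (b : M),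
      ((quotientInterpretation ι ρ).func n F).Realize
        (Sum.elim (fun p => (toDom ι ρ (f p.1)).1 p.2) (toDom ι ρ b).1) ↔
        Structure.funMap ρ ![Structure.funMap (ι.onFunction F) f] =
          Structure.funMap ρ ![b] := by
    intro n F f b
    simp only [quotientInterpretation, Formula.realize_equal, Term.realize_functions_apply₁]
    rfl
  constructor
  · rintro ⟨h1, h2, h3, h4⟩
    refine ⟨h1.comp hsurj, fun x y => (h2 _ _).trans (heq x y),
      fun R f => (h3 _ R _).trans (hr R f), fun F f => ?_⟩
    exact ((h4 _ F _ _).2 ((hF F f _).2 rfl)).symm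
  · rintro ⟨h1, h2, h3, h4⟩
    refine ⟨h1.of_comp, fun a b => ?_, fun n R f => ?_, fun n F f b => ?_⟩
    · obtain ⟨x, rfl⟩ := hsurj a
      obtain ⟨y, rfl⟩ := hsurj b
      exact (h2 x y).trans (heq x y).symm
    · obtain ⟨f, rfl⟩ := hfs f
      exact (h3 R f).trans (hr R f).symm
    · obtain ⟨f, rfl⟩ := hfs f
      obtain ⟨y, rfl⟩ := hsurj b
      refine Iff.trans ?_ (hF F f y).symm
      rw [← h2, h4]

end Quotients

section Saturation

variable {L : FirstOrder.Language.{0, 0}} {N : Type} [S : L.Structure N] {m : ℕ}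

/-- The existential projection of a finite conjunction to its first variable. -/
theorem ParamFormula.exists_projection (s : Finset (ParamFormula L N (m + 1))) :
    ∃ χ : ParamFormula L N 1, (∀ j, ∃ ψ ∈ s, ∃ i, χ.par j = ψ.par i) ∧
      ∀ e, χ.Realize e ↔ ∃ y : Fin m → N, ∀ ψ ∈ s, ψ.Realize (Fin.cons (e 0) y) := by
  let J := Σ ψ : s, Fin ψ.1.k
  let eJ : J ≃ Fin (Fintype.card J) := Fintype.equivFin J
  let v : ∀ ψ : s, Fin (m + 1) ⊕ Fin ψ.1.k → (Fin 1 ⊕ Fin (Fintype.card J)) ⊕ Fin m := fun ψ =>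
    Sum.elim (Fin.cons (.inl (.inl 0)) Sum.inr) fun j => .inl (.inr (eJ ⟨ψ, j⟩))
  refine ⟨⟨Fintype.card J,
    Formula.iExs (Fin m) (Formula.iInf fun ψ : s => ψ.1.toFormula.relabel (v ψ)),
    fun j => (eJ.symm j).1.1.par (eJ.symm j).2⟩, fun j => ⟨_, (eJ.symm j).1.2, _, rfl⟩,
    fun e => ?_⟩
  simp only [ParamFormula.Realize, Formula.realize_iExs, Formula.realize_iInf,
    Formula.realize_relabel, Subtype.forall]
  refine exists_congr fun y => forall₂_congr fun ψ hψ => iff_of_eq (congrArg _ ?_)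
  funext i
  rcases i with i | j
  · refine Fin.cases ?_ (fun i => ?_) i <;> simp [v]
  · have h : ∀ q q' : J, q = q' → q.1.1.par q.2 = q'.1.1.par q'.2 := by
      rintro q _ rfl
      rfl
    exact h _ _ (eJ.symm_apply_apply ⟨⟨ψ, hψ⟩, j⟩)

/-- Turn the first variable of a formula into a parameter. -/
def ParamFormula.specialize (c : N) (ψ : ParamFormula L N (m + 1)) : ParamFormula L N m where
  k := ψ.k + 1
  toFormula := ψ.toFormula.relabel
    (Sum.elim (Fin.cons (.inr 0) Sum.inl) fun j => .inr j.succ)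
  par := Fin.cons c ψ.par

theorem ParamFormula.specialize_realize (c : N) (ψ : ParamFormula L N (m + 1)) (y : Fin m → N) :
    (ψ.specialize c).Realize y ↔ ψ.Realize (Fin.cons c y) := by
  simp only [ParamFormula.Realize, ParamFormula.specialize, Formula.realize_relabel]
  refine iff_of_eq (congrArg _ ?_)
  funext i
  rcases i with i | j
  · refine Fin.cases ?_ (fun i => ?_) i <;> simp
  · simp

theorem IsSaturatedAt.exists_realize {lam : Cardinal.{0}} (hs : IsSaturatedAt L N S lam)
    (hlam : ℵ₀ ≤ lam) (m : ℕ) (A : Set N) (hA : #A < lam) (p : Set (ParamFormula L N m))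
    (hpA : ∀ ψ ∈ p, ∀ j, ψ.par j ∈ A)
    (hp : ∀ s : Finset (ParamFormula L N m), ↑s ⊆ p →
      ∃ e : Fin m → N, ∀ ψ ∈ s, ψ.Realize e) :
    ∃ e : Fin m → N, ∀ ψ ∈ p, ψ.Realize e := by
  classical
  induction m generalizing A with
  | zero =>
    refine ⟨Fin.elim0, fun ψ hψ => ?_⟩
    obtain ⟨e, he⟩ := hp {ψ} (by simpa using hψ)
    rw [Subsingleton.elim Fin.elim0 e]
    exact he ψ (by simp)
  | succ m ih =>
    choose proj hproj hreal using ParamFormula.exists_projection (L := L) (N := N) (m := m)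
    obtain ⟨e, he⟩ := hs A hA (proj '' {s | ↑s ⊆ p}) (by
        rintro _ ⟨s, hsp, rfl⟩ j
        obtain ⟨ψ, hψ, i, hi⟩ := hproj s j
        exact hi ▸ hpA ψ (hsp hψ) i) (by
        intro t ht
        obtain ⟨t, htp, rfl⟩ := Finset.subset_set_image_iff.1 ht
        obtain ⟨e, he⟩ := hp (t.biUnion id) (by
          intro ψ hψ
          obtain ⟨s, hs, hψ⟩ := Finset.mem_biUnion.1 hψ
          exact htp hs hψ)
        refine ⟨fun _ => e 0, fun χ hχ => ?_⟩
        obtain ⟨s, hs, rfl⟩ := Finset.mem_image.1 hχ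
        refine (hreal s _).2 ⟨Fin.tail e, fun ψ hψ => ?_⟩
        rw [Fin.cons_self_tail]
        exact he ψ (Finset.mem_biUnion.2 ⟨s, hs, hψ⟩))
    obtain ⟨y, hy⟩ := ih (insert (e 0) A)
      ((mk_insert_le).trans_lt (add_lt_of_lt hlam hA (one_lt_aleph0.trans_le hlam)))
      (ParamFormula.specialize (e 0) '' p) (by
        rintro _ ⟨ψ, hψ, rfl⟩ j
        refine Fin.cases ?_ (fun j => ?_) j
        · exact Set.mem_insert _ _
        · exact Set.mem_insert_of_mem _ (hpA ψ hψ j)) (by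
        intro t ht
        obtain ⟨t, htp, rfl⟩ := Finset.subset_set_image_iff.1 ht
        obtain ⟨y, hy⟩ := (hreal t e).1 (he _ ⟨t, htp, rfl⟩)
        refine ⟨y, fun χ hχ => ?_⟩
        obtain ⟨ψ, hψ, rfl⟩ := Finset.mem_image.1 hχ
        exact (ψ.specialize_realize _ _).2 (hy ψ hψ))
    exact ⟨Fin.cons (e 0) y, fun ψ hψ => (ψ.specialize_realize _ _).1 (hy _ ⟨ψ, hψ, rfl⟩)⟩

/-- In a saturated structure, small finitely fillable cuts of a definable relation are filled. -/
theorem IsSaturatedAt.exists_between {lam : Cardinal.{0}} (hs : IsSaturatedAt L N S lam)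
    (hlam : ℵ₀ ≤ lam) (φ : L.Formula (Fin m ⊕ Fin m)) {I J : Type} (hI : #I < lam) (hJ : #J < lam)
    (a : I → Fin m → N) (b : J → Fin m → N)
    (hfin : ∀ (s : Finset I) (t : Finset J), ∃ x : Fin m → N,
      (∀ i ∈ s, φ.Realize (Sum.elim (a i) x)) ∧ ∀ j ∈ t, φ.Realize (Sum.elim x (b j))) :
    ∃ x : Fin m → N, (∀ i, φ.Realize (Sum.elim (a i) x)) ∧ ∀ j, φ.Realize (Sum.elim x (b j)) := by
  classical
  let P : I ⊕ J → ParamFormula L N m :=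
    Sum.elim (fun i => ⟨m, φ.relabel Sum.swap, a i⟩) fun j => ⟨m, φ, b j⟩
  have hl : ∀ i x, (P (.inl i)).Realize x ↔ φ.Realize (Sum.elim (a i) x) := by
    intro i x
    simp only [P, ParamFormula.Realize, Sum.elim_inl, Formula.realize_relabel]
    refine iff_of_eq (congrArg _ ?_)
    funext i
    cases i <;> rfl
  have hr : ∀ j x, (P (.inr j)).Realize x ↔ φ.Realize (Sum.elim x (b j)) := fun j x => Iff.rfl
  let f : (I ⊕ J) × Fin m → N := fun q => Sum.elim a b q.1 q.2
  have hcard : #(Set.range f) < lam := by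
    refine mk_range_le.trans_lt ?_
    rw [mk_prod, mk_sum]
    simp only [lift_id, mk_fin]
    exact mul_lt_of_lt hlam (add_lt_of_lt hlam hI hJ) (natCast_lt_aleph0.trans_le hlam)
  obtain ⟨x, hx⟩ := hs.exists_realize hlam m (Set.range f) hcard (Set.range P) (by
      rintro _ ⟨i | j, rfl⟩ k
      · exact ⟨(.inl i, k), rfl⟩
      · exact ⟨(.inr j, k), rfl⟩) (by
      intro u hu
      rw [← Set.image_univ] at hu
      obtain ⟨u, -, rfl⟩ := Finset.subset_set_image_iff.1 hu
      obtain ⟨x, hx, hy⟩ := hfin u.toLeft u.toRight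
      refine ⟨x, fun ψ hψ => ?_⟩
      obtain ⟨i | j, hi, rfl⟩ := Finset.mem_image.1 hψ
      · exact (hl i x).2 (hx i (by simpa using hi))
      · exact (hr j x).2 (hy j (by simpa using hi)))
  exact ⟨x, fun i => (hl i x).1 (hx _ ⟨_, rfl⟩), fun j => (hr j x).1 (hx _ ⟨_, rfl⟩)⟩

end Saturation

section Lists

variable {U : Type}

/-- A longest element of a set of lists. -/
noncomputable def longest (P : List U → Prop) : List U :=
  Classical.epsilon fun u => P u ∧ ∀ d, P d → d <+: u

theorem longest_spec {P : List U → Prop} {d : List U} (hd : P d) {n : ℕ}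
    (hn : ∀ d, P d → d.length ≤ n) (hc : ∀ d d', P d → P d' → d <+: d' ∨ d' <+: d) :
    P (longest P) ∧ ∀ d, P d → d <+: longest P := by
  refine Classical.epsilon_spec (p := fun u => P u ∧ ∀ d, P d → d <+: u) ?_
  by_contra! H
  have : ∀ k : ℕ, ∃ d, P d ∧ k ≤ d.length := by
    intro k
    induction k with
    | zero => exact ⟨d, hd, Nat.zero_le _⟩
    | succ k ih =>
      obtain ⟨u, hu, hk⟩ := ih
      obtain ⟨v, hv, hvu⟩ := H u hu
      have huv : u <+: v := (hc u v hu hv).resolve_right hvu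
      refine ⟨v, hv, hk.trans_lt (lt_of_le_of_ne huv.length_le fun h => hvu ?_)⟩
      rw [huv.eq_of_length h]
  obtain ⟨u, hu, hk⟩ := this (n + 1)
  exact absurd (hn u hu) (by omega)

theorem longest_prefix_spec {P : List U → Prop} {l d : List U} (hd : P d)
    (hl : ∀ d, P d → d <+: l) : P (longest P) ∧ ∀ d, P d → d <+: longest P :=
  longest_spec hd (fun d h => (hl d h).length_le) fun _ _ h h' =>
    List.prefix_or_prefix_of_prefix (hl _ h) (hl _ h')

/-- The opening bracket of a node in the tree of lists, as a point of the lexicographic order. -/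
def openPt (v : List U) : List (WithTop U) := v.map WithTop.some

/-- The closing bracket of a node in the tree of lists, as a point of the lexicographic order. -/
def closePt (v : List U) : List (WithTop U) := v.map WithTop.some ++ [⊤]

variable [LinearOrder U]

theorem openPt_lt_openPt {v w : List U} (h : v <+: w) (h' : ¬ w <+: v) : openPt v < openPt w := by
  obtain ⟨u, rfl⟩ := h
  cases u with
  | nil => simp at h'
  | cons a u =>
    induction v with
    | nil => exact List.nil_lt_cons _ _
    | cons b v ih =>
      refine List.cons_lt_cons_self.2 (ih ?_)
      simpa using h'

theorem openPt_lt_closePt {v w : List U} (h : v <+: w ∨ w <+: v) : openPt v < closePt w := by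
  induction w generalizing v with
  | nil =>
    cases v with
    | nil => exact List.nil_lt_cons _ _
    | cons a v => exact List.Lex.rel (WithTop.coe_lt_top a)
  | cons b w ih =>
    cases v with
    | nil => exact List.nil_lt_cons _ _
    | cons a v =>
      obtain ⟨rfl, hvw⟩ : a = b ∧ (v <+: w ∨ w <+: v) := by
        simp only [List.cons_prefix_cons] at h
        tauto
      exact List.cons_lt_cons_self.2 (ih hvw)

theorem prefix_or_closePt_lt (v w : List U) :
    (v <+: w ∨ w <+: v) ∨ closePt v < openPt w ∨ closePt w < openPt v := by
  induction w generalizing v with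
  | nil => simp
  | cons b w ih =>
    cases v with
    | nil => simp
    | cons a v =>
      rcases lt_trichotomy a b with h | rfl | h
      · exact .inr (.inl (List.Lex.rel (WithTop.coe_lt_coe.2 h)))
      · rcases ih v with h | h | h
        · left
          simpa using h
        · exact .inr (.inl (List.cons_lt_cons_self.2 h))
        · exact .inr (.inr (List.cons_lt_cons_self.2 h))
      · exact .inr (.inr (List.Lex.rel (WithTop.coe_lt_coe.2 h)))

end Lists

section Chains

/-- If `φ` has an infinite chain and no `3`-cycle in a model of `T`, then, in suitable
models of `T`, it has chains of any order type and no `3`-cycle. -/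
theorem ExemplifiesSOP3.exists_chain {L : FirstOrder.Language.{0, 0}} {T : L.Theory}
    {𝓜 : Theory.ModelType.{0, 0, 0} T} {m : ℕ} {φ : L.Formula (Fin m ⊕ Fin m)}
    (hsop : ExemplifiesSOP3 φ 𝓜) (X : Type) [LinearOrder X] :
    ∃ (A : Theory.ModelType.{0, 0, 0} T) (F : X → Fin m → A),
      (∀ x y, x < y → φ.Realize (Sum.elim (F x) (F y))) ∧
      ∀ x y z : Fin m → A, φ.Realize (Sum.elim x y) → φ.Realize (Sum.elim y z) →
        ¬ φ.Realize (Sum.elim z x) := by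
  classical
  obtain ⟨⟨a, -, ha⟩, hcyc⟩ := hsop
  let u : Ultrafilter (Finset X) := Ultrafilter.of Filter.atTop
  have hu : (u : Filter (Finset X)) ≤ Filter.atTop := Ultrafilter.of_le _
  have hsum : ∀ x y : Fin m → Finset X → 𝓜,
      φ.Realize (Sum.elim (fun j => ((x j : (u : Filter (Finset X)).Product fun _ => (𝓜 : Type))))
        (fun j => ((y j : (u : Filter (Finset X)).Product fun _ => (𝓜 : Type))))) ↔
        ∀ᶠ s in u, φ.Realize (Sum.elim (fun j => x j s) (fun j => y j s)) := by
    intro x y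
    have h := Ultraproduct.realize_formula_cast (M := fun _ : Finset X => (𝓜 : Type)) (u := u) φ
      (Sum.elim x y)
    convert h using 2
    · funext j
      cases j <;> rfl
    · funext s
      refine congrArg φ.Realize ?_
      funext j
      cases j <;> rfl
  have hT : ((u : Filter (Finset X)).Product fun _ => (𝓜 : Type)) ⊨ T := by
    refine ⟨fun σ hσ => ?_⟩
    rw [Ultraproduct.sentence_realize]
    exact .of_forall fun _ => T.realize_sentence_of_mem hσ
  refine ⟨Theory.ModelType.of T ((u : Filter (Finset X)).Product fun _ => (𝓜 : Type)),
    fun x j => ((fun s : Finset X => a (s.filter (· < x)).card j :) :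
      (u : Filter (Finset X)).Product fun _ => (𝓜 : Type)), fun x y hxy => ?_, ?_⟩
  · refine (hsum _ _).2 (hu ?_)
    filter_upwards [Filter.eventually_ge_atTop {x}] with s hs
    refine ha _ _ (Finset.card_lt_card ?_)
    rw [Finset.ssubset_iff_of_subset]
    · exact ⟨x, by simpa [hxy] using hs, by simp⟩
    · intro z hz
      simp only [Finset.mem_filter] at hz ⊢
      exact ⟨hz.1, hz.2.trans hxy⟩
  · intro x y z hxy hyz hzx
    have hlift : ∀ w : Fin m → (u : Filter (Finset X)).Product fun _ => (𝓜 : Type),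
        ∃ w' : Fin m → Finset X → 𝓜, w = fun j => ((w' j :
          (u : Filter (Finset X)).Product fun _ => (𝓜 : Type))) := by
      intro w
      choose w' hw' using fun j => Quotient.exists_rep (w j)
      exact ⟨w', funext fun j => (hw' j).symm⟩
    obtain ⟨x, rfl⟩ := hlift x
    obtain ⟨y, rfl⟩ := hlift y
    obtain ⟨z, rfl⟩ := hlift z
    obtain ⟨s, h1, h2, h3⟩ :=
      (((hsum _ _).1 hxy).and (((hsum _ _).1 hyz).and ((hsum _ _).1 hzx))).exists
    exact hcyc ⟨_, _, _, h1, h2, h3⟩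

end Chains

section Brackets

/-- Operations on a set of codes of (nonstandard) finite lists of formulas, whose tree is coded
by intervals of a directed graph on `m`-tuples. -/
structure BracketOps (M : Type) (m : ℕ) where
  nil : M
  app : M → M → M
  opn : M → Fin m → M
  cls : M → Fin m → M
  bound : (Fin m → M) → M
  cut : M → (Fin m → M) → M
  top : M → M → M
  wit : M → M
  Con : M → Prop
  Small : ℕ → M → Prop
  Pre : M → M → Prop
  Sat : M → M → Prop
  Edge : (Fin m → M) → (Fin m → M) → Prop

/-- The properties of the bracket operations that hold in the standard structures, where
consistency is bounded by `N`. -/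
structure BracketOps.IsTree {M : Type} {m : ℕ} (B : BracketOps M m) (N : ℕ∞) : Prop where
  app_assoc : ∀ x y z, B.app (B.app x y) z = B.app x (B.app y z)
  sat_nil : ∀ x, B.Sat x B.nil
  sat_app : ∀ x y z, B.Sat x (B.app y z) ↔ B.Sat x y ∧ B.Sat x z
  small_nil : B.Small 0 B.nil
  small_app : ∀ k x y, B.Small 1 x → B.Small k y → B.Small (k + 1) (B.app x y)
  small_nil_app : ∀ k x, B.Small k x → B.Small k (B.app B.nil x)
  con_of_small : ∀ k : ℕ, (k : ℕ∞) ≤ N → ∀ x y, B.Small k y → B.Sat x y → B.Con y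
  sat_wit : ∀ x, B.Con x → B.Sat (B.wit x) x
  pre_refl : ∀ x, B.Pre x x
  pre_trans : ∀ x y z, B.Pre x y → B.Pre y z → B.Pre x z
  pre_app : ∀ x y, B.Pre x (B.app x y)
  con_of_pre : ∀ x y z, B.Pre x y → B.Con (B.app y z) → B.Con (B.app x z)
  sat_of_pre : ∀ x y z, B.Pre x y → B.Sat z y → B.Sat z x
  edge_opn : ∀ x y, B.Pre x y → ¬ B.Pre y x → B.Edge (B.opn x) (B.opn y)
  edge_cls : ∀ x y, B.Pre x y ∨ B.Pre y x → B.Edge (B.opn x) (B.cls y)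
  pre_bound : ∀ x y e, B.Con (B.app x y) → B.Edge (B.opn x) e → B.Edge e (B.cls x) →
    B.Pre x (B.bound e)
  top_spec : ∀ x y z, B.Pre x y → B.Con (B.app x z) →
    B.Pre x (B.top y z) ∧ B.Con (B.app (B.top y z) z) ∧ B.Pre (B.top y z) y
  pre_cut : ∀ x y e, B.Pre x y → B.Edge (B.opn x) e → B.Pre x (B.cut y e)
  cut_pre : ∀ x y z e, B.Pre x y → B.Edge (B.opn x) e → B.Pre z y → B.Edge e (B.opn z) →
    B.Pre (B.cut y e) z

namespace BracketOps

variable {M : Type} {m : ℕ} (B : BracketOps M m) {P : Type} (q : P → M)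

/-- The concatenation of a list of codes. -/
def prod (s : List P) : M := s.foldr (fun p x => B.app (q p) x) B.nil

/-- A node that is consistent with every list of codes. -/
def Good (v : M) : Prop := ∀ s : List P, B.Con (B.app v (B.prod q s))

/-- Small families of tuples that are finitely separated by `Edge` are separated. -/
def Fills (lam : Cardinal.{0}) : Prop :=
  ∀ (I J : Type), #I < lam → #J < lam → ∀ (a : I → Fin m → M) (b : J → Fin m → M),
    (∀ (s : Finset I) (t : Finset J), ∃ x : Fin m → M,
      (∀ i ∈ s, B.Edge (a i) x) ∧ ∀ j ∈ t, B.Edge x (b j)) →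
    ∃ x : Fin m → M, (∀ i, B.Edge (a i) x) ∧ ∀ j, B.Edge x (b j)

variable {B q}

theorem IsTree.good_app {N : ℕ∞} (h : B.IsTree N) {v : M} (hv : B.Good q v) (p : P) :
    B.Good q (B.app v (q p)) := by
  intro s
  rw [h.app_assoc]
  exact hv (p :: s)

theorem IsTree.good_nil (h : B.IsTree ⊤) (hq : ∀ p, B.Small 1 (q p))
    (hfin : ∀ s : List P, ∃ x, ∀ p ∈ s, B.Sat x (q p)) : B.Good q B.nil := by
  intro s
  obtain ⟨x, hx⟩ := hfin s
  refine h.con_of_small s.length le_top x _ (h.small_nil_app _ _ ?_)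
    ((h.sat_app _ _ _).2 ⟨h.sat_nil x, ?_⟩)
  · clear hx
    induction s with
    | nil => exact h.small_nil
    | cons p s ih => exact h.small_app _ _ _ (hq p) ih
  · induction s with
    | nil => exact h.sat_nil x
    | cons p s ih =>
      exact (h.sat_app _ _ _).2 ⟨hx p (by simp), ih fun p hp => hx p (by simp [hp])⟩

/-- A short chain of good nodes has a good upper bound. -/
theorem IsTree.exists_good_bound (h : B.IsTree ⊤) {lam : Cardinal.{0}} (hlam : ℵ₀ < lam)
    (hB : B.Fills lam) (hP : #P < lam) (hnil : B.Good q B.nil) {I : Type} (hI : #I < lam)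
    (d : I → M) (hd : ∀ i, B.Good q (d i)) (htot : ∀ i j, B.Pre (d i) (d j) ∨ B.Pre (d j) (d i)) :
    ∃ v, B.Good q v ∧ ∀ i, B.Pre (d i) v := by
  classical
  rcases isEmpty_or_nonempty I with hI' | ⟨⟨i₀⟩⟩
  · exact ⟨B.nil, hnil, isEmptyElim⟩
  by_cases hmax : ∃ i, ∀ j, B.Pre (d j) (d i)
  · obtain ⟨i, hi⟩ := hmax
    exact ⟨d i, hd i, hi⟩
  push Not at hmax
  have hup : ∀ s : Finset I, ∃ j, ∀ i ∈ s, B.Pre (d i) (d j) ∧ ¬ B.Pre (d j) (d i) := by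
    intro s
    induction s using Finset.induction_on with
    | empty => exact ⟨i₀, by simp⟩
    | insert i s _ ih =>
      obtain ⟨j, hj⟩ := ih
      obtain ⟨k, hik, hjk⟩ : ∃ k, B.Pre (d i) (d k) ∧ B.Pre (d j) (d k) := by
        rcases htot i j with hij | hij
        · exact ⟨j, hij, h.pre_refl _⟩
        · exact ⟨i, h.pre_refl _, hij⟩
      obtain ⟨l, hl⟩ := hmax k
      have hkl := (htot k l).resolve_right hl
      refine ⟨l, fun i' hi' => ?_⟩
      have hk : B.Pre (d i') (d k) := by
        rcases Finset.mem_insert.1 hi' with rfl | hi'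
        · exact hik
        · exact h.pre_trans _ _ _ (hj i' hi').1 hjk
      exact ⟨h.pre_trans _ _ _ hk hkl, fun hli => hl (h.pre_trans _ _ _ hli hk)⟩
  obtain ⟨e, he, he'⟩ := hB I I hI hI (fun i => B.opn (d i)) (fun i => B.cls (d i)) (by
    intro s t
    obtain ⟨j, hj⟩ := hup (s ∪ t)
    refine ⟨B.opn (d j), fun i hi => ?_, fun i hi => ?_⟩
    · exact h.edge_opn _ _ (hj i (by simp [hi])).1 (hj i (by simp [hi])).2
    · exact h.edge_cls _ _ (.inr (hj i (by simp [hi])).1))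
  have hv : ∀ i, B.Pre (d i) (B.bound e) := fun i => h.pre_bound _ _ e (hd i []) (he i) (he' i)
  have htop := fun i (s : List P) => h.top_spec _ _ _ (hv i) (hd i s)
  have hlist : #(List P) < lam := (mk_list_le_max P).trans_lt (max_lt hlam hP)
  obtain ⟨e', he, he'⟩ := hB I (List P) hI hlist (fun i => B.opn (d i))
    (fun s => B.opn (B.top (B.bound e) (B.prod q s))) (by
    intro s t
    obtain ⟨j, hj⟩ := hup s
    refine ⟨B.opn (d j), fun i hi => h.edge_opn _ _ (hj i hi).1 (hj i hi).2,
      fun l _ => h.edge_opn _ _ (htop j l).1 fun hlj => ?_⟩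
    obtain ⟨k, hk⟩ := hmax j
    exact hk (h.pre_trans _ _ _ (htop k l).1 hlj))
  refine ⟨B.cut (B.bound e) e', fun s => ?_, fun i => h.pre_cut _ _ _ (hv i) (he i)⟩
  exact h.con_of_pre _ _ _
    (h.cut_pre _ _ _ _ (hv i₀) (he i₀) (htop i₀ s).2.2 (he' s)) (htop i₀ s).2.1

/-- A small finitely satisfiable family of codes is satisfied. -/
theorem IsTree.exists_sat (h : B.IsTree ⊤) {lam : Cardinal.{0}} (hlam : ℵ₀ < lam)
    (hB : B.Fills lam) (hP : #P < lam) (hq : ∀ p, B.Small 1 (q p))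
    (hfin : ∀ s : List P, ∃ x, ∀ p ∈ s, B.Sat x (q p)) : ∃ x, ∀ p, B.Sat x (q p) := by
  have hnil := h.good_nil hq hfin
  have : Nonempty M := ⟨B.nil⟩
  let r : P → P → Prop := WellOrderingRel
  have hwf : WellFounded r := WellOrderingRel.isWellOrder.wf
  let f : P → M := hwf.fix fun p f => Classical.epsilon fun v =>
    B.Good q v ∧ (∀ x, B.Sat x v → B.Sat x (q p)) ∧ ∀ p' hp', B.Pre (f p' hp') v
  have hf : ∀ p, B.Good q (f p) ∧ (∀ x, B.Sat x (f p) → B.Sat x (q p)) ∧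
      ∀ p', r p' p → B.Pre (f p') (f p) := by
    intro p
    induction p using hwf.induction with
    | _ p ih =>
      have hfp : f p = Classical.epsilon fun v =>
        B.Good q v ∧ (∀ x, B.Sat x v → B.Sat x (q p)) ∧ ∀ p', r p' p → B.Pre (f p') v :=
        hwf.fix_eq _ p
      rw [hfp]
      refine Classical.epsilon_spec (p := fun v => B.Good q v ∧
        (∀ x, B.Sat x v → B.Sat x (q p)) ∧ ∀ p', r p' p → B.Pre (f p') v) ?_
      obtain ⟨v, hv, hpv⟩ := h.exists_good_bound hlam hB hP hnil
        (I := {p' // r p' p}) ((mk_subtype_le _).trans_lt hP) (fun i => f i.1)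
        (fun i => (ih _ i.2).1) (by
          rintro ⟨i, hi⟩ ⟨j, hj⟩
          rcases trichotomous_of r i j with hij | rfl | hij
          · exact .inl ((ih j hj).2.2 i hij)
          · exact .inl (h.pre_refl _)
          · exact .inr ((ih i hi).2.2 j hij))
      exact ⟨B.app v (q p), h.good_app hv p, fun x hx => ((h.sat_app _ _ _).1 hx).2,
        fun p' hp' => h.pre_trans _ _ _ (hpv ⟨p', hp'⟩) (h.pre_app _ _)⟩
  obtain ⟨v, hv, hpv⟩ := h.exists_good_bound hlam hB hP hnil hP f (fun i => (hf i).1) (by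
    intro i j
    rcases trichotomous_of r i j with hij | rfl | hij
    · exact .inl ((hf j).2.2 i hij)
    · exact .inl (h.pre_refl _)
    · exact .inr ((hf i).2.2 j hij))
  refine ⟨B.wit (B.app v (B.prod q [])), fun p => (hf p).2.1 _ (h.sat_of_pre _ _ _ (hpv p) ?_)⟩
  exact ((h.sat_app _ _ _).1 (h.sat_wit _ (hv []))).1

end BracketOps

end Brackets

section BracketLanguage

/-- The function symbols of the bracket language over `L'` and `L`. -/
inductive BracketFun (L' L : FirstOrder.Language.{0, 0}) (m : ℕ) : ℕ → Type
  | left {n : ℕ} (F : L'.Functions n) : BracketFun L' L m n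
  | right {n : ℕ} (F : L.Functions n) : BracketFun L' L m n
  | code {k : ℕ} (ψ : L'.Formula (Fin 1 ⊕ Fin k)) : BracketFun L' L m k
  | repLeft : BracketFun L' L m 1
  | repRight : BracketFun L' L m 1
  | nil : BracketFun L' L m 0
  | app : BracketFun L' L m 2
  | opn (j : Fin m) : BracketFun L' L m 1
  | cls (j : Fin m) : BracketFun L' L m 1
  | bound : BracketFun L' L m m
  | cut : BracketFun L' L m (m + 1)
  | top : BracketFun L' L m 2
  | wit : BracketFun L' L m 1

/-- The relation symbols of the bracket language over `L'` and `L`. -/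
inductive BracketRel (L' L : FirstOrder.Language.{0, 0}) : ℕ → Type
  | left {n : ℕ} (R : L'.Relations n) : BracketRel L' L n
  | right {n : ℕ} (R : L.Relations n) : BracketRel L' L n
  | con : BracketRel L' L 1
  | small (k : ℕ) : BracketRel L' L 1
  | pre : BracketRel L' L 2
  | sat : BracketRel L' L 2

/-- The bracket language over `L'` and `L`. -/
def bracketLang (L' L : FirstOrder.Language.{0, 0}) (m : ℕ) : FirstOrder.Language.{0, 0} :=
  ⟨BracketFun L' L m, BracketRel L' L⟩

variable {L' L : FirstOrder.Language.{0, 0}} {m : ℕ}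

/-- The inclusion of `L'` in the bracket language. -/
def leftHom (L' L : FirstOrder.Language.{0, 0}) (m : ℕ) : L' →ᴸ bracketLang L' L m where
  onFunction := fun _ F => BracketFun.left F
  onRelation := fun _ R => BracketRel.left R

/-- The inclusion of `L` in the bracket language. -/
def rightHom (L' L : FirstOrder.Language.{0, 0}) (m : ℕ) : L →ᴸ bracketLang L' L m where
  onFunction := fun _ F => BracketFun.right F
  onRelation := fun _ R => BracketRel.right R

/-- The function symbol whose kernel defines the `L'`-reduct. -/
def repLeft (L' L : FirstOrder.Language.{0, 0}) (m : ℕ) : (bracketLang L' L m).Functions 1 :=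
  BracketFun.repLeft

/-- The function symbol whose kernel defines the `L`-reduct. -/
def repRight (L' L : FirstOrder.Language.{0, 0}) (m : ℕ) : (bracketLang L' L m).Functions 1 :=
  BracketFun.repRight

/-- The bracket operations of a structure in the bracket language. -/
def bracketOps (L' : FirstOrder.Language.{0, 0}) {L : FirstOrder.Language.{0, 0}} {m : ℕ}
    (φ : L.Formula (Fin m ⊕ Fin m)) (M : Type) [(bracketLang L' L m).Structure M] :
    BracketOps M m where
  nil := Structure.funMap (L := bracketLang L' L m) BracketFun.nil ![]
  app x y := Structure.funMap (L := bracketLang L' L m) BracketFun.app ![x, y]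
  opn x j := Structure.funMap (L := bracketLang L' L m) (BracketFun.opn j) ![x]
  cls x j := Structure.funMap (L := bracketLang L' L m) (BracketFun.cls j) ![x]
  bound e := Structure.funMap (L := bracketLang L' L m) BracketFun.bound e
  cut x e := Structure.funMap (L := bracketLang L' L m) BracketFun.cut (Fin.cons x e)
  top x y := Structure.funMap (L := bracketLang L' L m) BracketFun.top ![x, y]
  wit x := Structure.funMap (L := bracketLang L' L m) BracketFun.wit ![x]
  Con x := Structure.RelMap (L := bracketLang L' L m) BracketRel.con ![x]
  Small k x := Structure.RelMap (L := bracketLang L' L m) (BracketRel.small k) ![x]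
  Pre x y := Structure.RelMap (L := bracketLang L' L m) BracketRel.pre ![x, y]
  Sat x y := Structure.RelMap (L := bracketLang L' L m) BracketRel.sat ![x, y]
  Edge a b := Formula.Realize
    (translate (rightHom L' L m) (repRight L' L m) φ : (bracketLang L' L m).Formula _)
    (Sum.elim a b)

/-- Unary predicates on `A`, without the pointwise order. -/
def UnaryPred (A : Type) : Type := A → Prop

/-- The data from which the standard bracket structures are built: a model of `T'` with a linear
order of its unary predicates, and a model of `T` with a long chain of `φ`, which has
no `3`-cycles. -/
structure BracketData (T' : L'.Theory) (T : L.Theory) (φ : L.Formula (Fin m ⊕ Fin m)) where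
  left : Theory.ModelType.{0, 0, 0} T'
  order : LinearOrder (UnaryPred left)
  right : Theory.ModelType.{0, 0, 0} T
  chain : List (WithTop (UnaryPred left)) → Fin m → right
  chain_edge : ∀ x y, x < y → φ.Realize (Sum.elim (chain x) (chain y))
  no_cycle : ∀ x y z : Fin m → right, φ.Realize (Sum.elim x y) → φ.Realize (Sum.elim y z) →
    ¬ φ.Realize (Sum.elim z x)

namespace BracketData

variable {T' : L'.Theory} {T : L.Theory} {φ : L.Formula (Fin m ⊕ Fin m)}

/-- The universe of the standard bracket structure. -/
def Carrier (D : BracketData T' T φ) (_ : ℕ) : Type := D.left × D.right × List (UnaryPred D.left)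

variable (D : BracketData T' T φ) (N : ℕ)

/-- A list of predicates as an element of the standard bracket structure. -/
noncomputable def ofList (w : List (UnaryPred D.left)) : D.Carrier N :=
  (Classical.arbitrary _, Classical.arbitrary _, w)

/-- An element of the model of `T'` as an element of the standard bracket structure. -/
noncomputable def ofLeft (x : D.left) : D.Carrier N := (x, Classical.arbitrary _, [])

/-- An element of the model of `T` as an element of the standard bracket structure. -/
noncomputable def ofRight (x : D.right) : D.Carrier N := (Classical.arbitrary _, x, [])

instance : Nonempty (D.Carrier N) := ⟨D.ofList N []⟩

/-- A list of predicates is consistent if it is short and has a common solution. -/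
def Consistent (w : List (UnaryPred D.left)) : Prop := w.length ≤ N ∧ ∃ x, ∀ s ∈ w, s x

/-- The functions of the standard bracket structure. -/
noncomputable def fn : ∀ {n : ℕ}, BracketFun L' L m n → (Fin n → D.Carrier N) → D.Carrier N
  | _, .left F, v => D.ofLeft N (Structure.funMap F fun i => (v i).1)
  | _, .right F, v => D.ofRight N (Structure.funMap F fun i => (v i).2.1)
  | _, .code ψ, v => D.ofList N [fun x => ψ.Realize (Sum.elim (fun _ => x) fun i => (v i).1)]
  | _, .repLeft, v => D.ofLeft N (v 0).1
  | _, .repRight, v => D.ofRight N (v 0).2.1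
  | _, .nil, _ => D.ofList N []
  | _, .app, v => D.ofList N ((v 0).2.2 ++ (v 1).2.2)
  | _, .opn j, v => D.ofRight N (D.chain (openPt (v 0).2.2) j)
  | _, .cls j, v => D.ofRight N (D.chain (closePt (v 0).2.2) j)
  | _, .bound, v => D.ofList N (longest fun d => d.length ≤ N ∧
      φ.Realize (Sum.elim (D.chain (openPt d)) fun i => (v i).2.1) ∧
      φ.Realize (Sum.elim (fun i => (v i).2.1) (D.chain (closePt d))))
  | _, .cut, v => D.ofList N (longest fun d => d <+: (v 0).2.2 ∧
      φ.Realize (Sum.elim (D.chain (openPt d)) fun i => (v i.succ).2.1))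
  | _, .top, v => D.ofList N (longest fun d => d <+: (v 0).2.2 ∧
      D.Consistent N (d ++ (v 1).2.2))
  | _, .wit, v => D.ofLeft N (Classical.epsilon fun x => ∀ s ∈ (v 0).2.2, s x)

/-- The relations of the standard bracket structure. -/
def relation : ∀ {n : ℕ}, BracketRel L' L n → (Fin n → D.Carrier N) → Prop
  | _, .left R, v => Structure.RelMap R fun i => (v i).1
  | _, .right R, v => Structure.RelMap R fun i => (v i).2.1
  | _, .con, v => D.Consistent N (v 0).2.2
  | _, .small k, v => (v 0).2.2.length ≤ k
  | _, .pre, v => (v 0).2.2 <+: (v 1).2.2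
  | _, .sat, v => ∀ s ∈ (v 1).2.2, s (v 0).1

noncomputable instance : (bracketLang L' L m).Structure (D.Carrier N) where
  funMap := D.fn N
  RelMap := D.relation N

theorem isQuotient_left : IsQuotient (leftHom L' L m) (repLeft L' L m)
    (fun x : D.Carrier N => x.1) where
  surjective x := ⟨D.ofLeft N x, rfl⟩
  eq_iff _ _ := ⟨congrArg (D.ofLeft N), congrArg fun x : D.Carrier N => x.1⟩
  relMap_iff _ _ := Iff.rfl
  map_fun _ _ := rfl

theorem isQuotient_right : IsQuotient (rightHom L' L m) (repRight L' L m)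
    (fun x : D.Carrier N => x.2.1) where
  surjective x := ⟨D.ofRight N x, rfl⟩
  eq_iff _ _ := ⟨congrArg (D.ofRight N), congrArg fun x : D.Carrier N => x.2.1⟩
  relMap_iff _ _ := Iff.rfl
  map_fun _ _ := rfl

theorem edge_iff (a b : Fin m → D.Carrier N) :
    (bracketOps L' φ (D.Carrier N)).Edge a b ↔
      φ.Realize (Sum.elim (fun i => (a i).2.1) fun i => (b i).2.1) := by
  refine ((D.isQuotient_right N).realize_formula φ _).trans (iff_of_eq (congrArg _ ?_))
  funext i
  cases i <;> rfl

theorem isTree : (bracketOps L' φ (D.Carrier N)).IsTree N := by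
  let _ := D.order
  have hedge := D.edge_iff N
  have happ : ∀ x y, ((bracketOps L' φ (D.Carrier N)).app x y).2.2 = x.2.2 ++ y.2.2 :=
    fun _ _ => rfl
  have hCon : ∀ x, (bracketOps L' φ (D.Carrier N)).Con x ↔ D.Consistent N x.2.2 := fun _ => Iff.rfl
  have hSat : ∀ x y, (bracketOps L' φ (D.Carrier N)).Sat x y ↔ ∀ s ∈ y.2.2, s x.1 :=
    fun _ _ => Iff.rfl
  have hSmall : ∀ k x, (bracketOps L' φ (D.Carrier N)).Small k x ↔ x.2.2.length ≤ k :=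
    fun _ _ => Iff.rfl
  have hopn : ∀ x, (fun i => ((bracketOps L' φ (D.Carrier N)).opn x i).2.1) =
      D.chain (openPt x.2.2) := fun _ => rfl
  have hcls : ∀ x, (fun i => ((bracketOps L' φ (D.Carrier N)).cls x i).2.1) =
      D.chain (closePt x.2.2) := fun _ => rfl
  have hcon : ∀ x y z : List (UnaryPred D.left), x <+: y → D.Consistent N (y ++ z) →
      D.Consistent N (x ++ z) := by
    rintro x y z ⟨u, rfl⟩ ⟨h1, a, h2⟩
    refine ⟨by simp at h1 ⊢; omega, a, fun s hs => h2 s ?_⟩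
    simp at hs ⊢
    tauto
  constructor
  · exact fun x y z => congrArg (D.ofList N) (List.append_assoc _ _ _)
  · intro x
    exact (hSat _ _).2 fun s hs => absurd hs (by exact List.not_mem_nil)
  · intro x y z
    simp only [hSat, happ, List.mem_append, or_imp, forall_and]
  · exact Nat.le_refl 0
  · intro k x y hx hy
    rw [hSmall] at *
    rw [happ, List.length_append]
    omega
  · exact fun k x hx => hx
  · intro k hk x y hy hxy
    exact ⟨hy.trans (by exact_mod_cast hk), x.1, hxy⟩
  · intro x hx
    exact Classical.epsilon_spec hx.2
  · exact fun x => List.prefix_rfl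
  · exact fun x y z h h' => List.IsPrefix.trans h h'
  · exact fun x y => List.prefix_append _ _
  · exact fun x y z h h' => hcon _ _ _ h h'
  · exact fun x y z h h' s hs => h' s (h.subset hs)
  · intro x y h h'
    rw [hedge, hopn, hopn]
    exact D.chain_edge _ _ (openPt_lt_openPt h h')
  · intro x y h
    rw [hedge, hopn, hcls]
    exact D.chain_edge _ _ (openPt_lt_closePt h)
  · intro x y e h h1 h2
    rw [hedge, hopn] at h1
    rw [hedge, hcls] at h2
    have hx : x.2.2.length ≤ N := by
      have := ((hCon _).1 h).1
      rw [happ, List.length_append] at this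
      omega
    refine (longest_spec (P := fun d => d.length ≤ N ∧
      φ.Realize (Sum.elim (D.chain (openPt d)) fun i => (e i).2.1) ∧
      φ.Realize (Sum.elim (fun i => (e i).2.1) (D.chain (closePt d)))) ⟨hx, h1, h2⟩
      (fun d hd => hd.1) ?_).2 _ ⟨hx, h1, h2⟩
    intro d d' hd hd'
    rcases prefix_or_closePt_lt d d' with h | h | h
    · exact h
    · exact absurd hd'.2.1 (D.no_cycle _ _ _ hd.2.2 (D.chain_edge _ _ h))
    · exact absurd hd.2.1 (D.no_cycle _ _ _ hd'.2.2 (D.chain_edge _ _ h))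
  · intro x y z h h1
    have := longest_prefix_spec (P := fun d => d <+: y.2.2 ∧ D.Consistent N (d ++ z.2.2))
      (l := y.2.2) (d := x.2.2) ⟨h, h1⟩ fun d hd => hd.1
    exact ⟨this.2 _ ⟨h, h1⟩, this.1.2, this.1.1⟩
  · intro x y e h h1
    rw [hedge, hopn] at h1
    exact (longest_prefix_spec (P := fun d => d <+: y.2.2 ∧
      φ.Realize (Sum.elim (D.chain (openPt d)) fun i => (e i).2.1)) (l := y.2.2) ⟨h, h1⟩
      fun d hd => hd.1).2 _ ⟨h, h1⟩
  · intro x y z e h h1 h2 h3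
    rw [hedge, hopn] at h1 h3
    have hd := (longest_prefix_spec (P := fun d => d <+: y.2.2 ∧
      φ.Realize (Sum.elim (D.chain (openPt d)) fun i => (e i).2.1)) (l := y.2.2) ⟨h, h1⟩
      fun d hd => hd.1).1
    rcases List.prefix_or_prefix_of_prefix hd.1 h2 with h4 | h4
    · exact h4
    · by_contra h5
      exact D.no_cycle _ _ _ h3 (D.chain_edge _ _ (openPt_lt_openPt h4 h5)) hd.2

end BracketData

end BracketLanguage

section BracketTheory

variable {L' L : FirstOrder.Language.{0, 0}} {m : ℕ}

/-- The theory of the standard bracket structures with a large bound on consistency. -/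
def bracketTheory (T' : L'.Theory) (T : L.Theory) (φ : L.Formula (Fin m ⊕ Fin m)) :
    (bracketLang L' L m).Theory :=
  {σ | ∀ D : BracketData T' T φ, ∀ᶠ N in Filter.hyperfilter ℕ, D.Carrier N ⊨ σ}

variable {T' : L'.Theory} {T : L.Theory} {φ : L.Formula (Fin m ⊕ Fin m)}

theorem realize_of_bracketData {M : Type} [(bracketLang L' L m).Structure M]
    (hM : M ⊨ bracketTheory T' T φ) {β : Type} [Finite β] (χ : (bracketLang L' L m).Formula β)
    (hχ : ∀ D : BracketData T' T φ, ∀ᶠ N in Filter.hyperfilter ℕ,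
      ∀ v : β → D.Carrier N, χ.Realize v) (v : β → M) : χ.Realize v := by
  let σ : (bracketLang L' L m).Sentence :=
    Formula.iAlls β (χ.relabel (Sum.inr : β → Empty ⊕ β))
  have hσ : ∀ (K : Type) [(bracketLang L' L m).Structure K],
      K ⊨ σ ↔ ∀ v : β → K, χ.Realize v := by
    intro K _
    simp only [σ, Sentence.Realize, Formula.realize_iAlls, Formula.realize_relabel]
    exact Iff.rfl
  have hmem : σ ∈ bracketTheory T' T φ := fun D => (hχ D).mono fun N h => (hσ _).2 h
  exact (hσ M).1 (hM.realize_of_mem _ hmem) v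

section Realization

variable {β : Type} (M : Type) [(bracketLang L' L m).Structure M] (φ) (v : β → M)

local notation "BL" => bracketLang L' L m

theorem realize_nil : (Term.func (L := BL) BracketFun.nil ![] : (BL).Term β).realize v =
    (bracketOps L' φ M).nil := by
  simp only [Term.realize]
  exact congrArg _ (Subsingleton.elim _ _)

theorem realize_app (t u : (BL).Term β) :
    (Functions.apply₂ (L := BL) BracketFun.app t u).realize v =
      (bracketOps L' φ M).app (t.realize v) (u.realize v) :=
  Term.realize_functions_apply₂

theorem realize_top (t u : (BL).Term β) :
    (Functions.apply₂ (L := BL) BracketFun.top t u).realize v =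
      (bracketOps L' φ M).top (t.realize v) (u.realize v) :=
  Term.realize_functions_apply₂

theorem realize_wit (t : (BL).Term β) :
    (Functions.apply₁ (L := BL) BracketFun.wit t).realize v =
      (bracketOps L' φ M).wit (t.realize v) :=
  Term.realize_functions_apply₁

theorem realize_opn (t : (BL).Term β) :
    (fun j => (Functions.apply₁ (L := BL) (BracketFun.opn j) t).realize v) =
      (bracketOps L' φ M).opn (t.realize v) :=
  funext fun _ => Term.realize_functions_apply₁

theorem realize_cls (t : (BL).Term β) :
    (fun j => (Functions.apply₁ (L := BL) (BracketFun.cls j) t).realize v) =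
      (bracketOps L' φ M).cls (t.realize v) :=
  funext fun _ => Term.realize_functions_apply₁

theorem realize_bound (e : Fin m → (BL).Term β) :
    (Term.func (L := BL) BracketFun.bound e).realize v =
      (bracketOps L' φ M).bound fun j => (e j).realize v :=
  rfl

theorem realize_cut (t : (BL).Term β) (e : Fin m → (BL).Term β) :
    (Term.func (L := BL) BracketFun.cut (Fin.cons t e)).realize v =
      (bracketOps L' φ M).cut (t.realize v) fun j => (e j).realize v := by
  simp only [Term.realize, bracketOps]
  congr 1
  funext i
  refine Fin.cases ?_ (fun i => ?_) i <;> simp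

theorem realize_con (t : (BL).Term β) :
    (Relations.formula₁ (L := BL) BracketRel.con t).Realize v ↔
      (bracketOps L' φ M).Con (t.realize v) :=
  Formula.realize_rel₁

theorem realize_small (k : ℕ) (t : (BL).Term β) :
    (Relations.formula₁ (L := BL) (BracketRel.small k) t).Realize v ↔
      (bracketOps L' φ M).Small k (t.realize v) :=
  Formula.realize_rel₁

theorem realize_pre (t u : (BL).Term β) :
    (Relations.formula₂ (L := BL) BracketRel.pre t u).Realize v ↔
      (bracketOps L' φ M).Pre (t.realize v) (u.realize v) :=
  Formula.realize_rel₂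

theorem realize_sat (t u : (BL).Term β) :
    (Relations.formula₂ (L := BL) BracketRel.sat t u).Realize v ↔
      (bracketOps L' φ M).Sat (t.realize v) (u.realize v) :=
  Formula.realize_rel₂

/-- The edge relation of the bracket operations, between tuples of terms. -/
def edgeFormula (a b : Fin m → (BL).Term β) : (BL).Formula β :=
  BoundedFormula.subst (translate (rightHom L' L m) (repRight L' L m) φ) (Sum.elim a b)

theorem realize_edge (a b : Fin m → (BL).Term β) :
    (edgeFormula φ a b).Realize v ↔
      (bracketOps L' φ M).Edge (fun j => (a j).realize v) fun j => (b j).realize v := by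
  rw [edgeFormula, Formula.Realize, BoundedFormula.realize_subst]
  refine iff_of_eq (congrArg (fun w => BoundedFormula.Realize _ w _) ?_)
  funext i
  cases i <;> rfl

end Realization

section Models

local notation "BL" => bracketLang L' L m
local notation "tx" => (Term.var (Sum.inl 0) : Term (bracketLang L' L m) (Fin 3 ⊕ Fin m))
local notation "ty" => (Term.var (Sum.inl 1) : Term (bracketLang L' L m) (Fin 3 ⊕ Fin m))
local notation "tz" => (Term.var (Sum.inl 2) : Term (bracketLang L' L m) (Fin 3 ⊕ Fin m))
local notation "te" => (fun j => Term.var (Sum.inr j) : Fin m → Term (BL) (Fin 3 ⊕ Fin m))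
local notation "tnil" => (Term.func BracketFun.nil ![] : Term (BL) (Fin 3 ⊕ Fin m))
local notation "tapp" => Functions.apply₂ (L := bracketLang L' L m) BracketFun.app
local notation "ttop" => Functions.apply₂ (L := bracketLang L' L m) BracketFun.top
local notation "twit" => Functions.apply₁ (L := bracketLang L' L m) BracketFun.wit
local notation "topn" => fun t j => Functions.apply₁ (L := bracketLang L' L m) (BracketFun.opn j) t
local notation "tcls" => fun t j => Functions.apply₁ (L := bracketLang L' L m) (BracketFun.cls j) t
local notation "tbound" => Term.func (L := bracketLang L' L m) BracketFun.bound te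
local notation "tcut" => fun t => Term.func (L := BL) BracketFun.cut (Fin.cons t te)
local notation "fcon" => Relations.formula₁ (L := bracketLang L' L m) BracketRel.con
local notation "fsmall" => fun k => Relations.formula₁ (L := BL) (BracketRel.small k)
local notation "fpre" => Relations.formula₂ (L := bracketLang L' L m) BracketRel.pre
local notation "fsat" => Relations.formula₂ (L := bracketLang L' L m) BracketRel.sat

theorem isTree_of_models {M : Type} [(bracketLang L' L m).Structure M] [Nonempty M]
    (hM : M ⊨ bracketTheory T' T φ) : (bracketOps L' φ M).IsTree ⊤ := by
  have key : ∀ (P : ∀ {K : Type}, BracketOps K m → K → K → K → (Fin m → K) → Prop)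
      (χ : (BL).Formula (Fin 3 ⊕ Fin m)),
      (∀ (K : Type) [(BL).Structure K] (x y z : K) (e : Fin m → K),
        χ.Realize (Sum.elim ![x, y, z] e) ↔ P (bracketOps L' φ K) x y z e) →
      (∃ n : ℕ, ∀ (K : Type) (B : BracketOps K m) (N : ℕ), n ≤ N → B.IsTree N →
        ∀ x y z e, P B x y z e) →
      ∀ x y z e, P (bracketOps L' φ M) x y z e := by
    rintro P χ hP ⟨n, hn⟩ x y z e
    refine (hP M x y z e).1 (realize_of_bracketData hM χ (fun D => ?_) _)
    have : ∀ᶠ N in Filter.hyperfilter ℕ, n ≤ N := by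
      exact Filter.hyperfilter_le_cofinite (Nat.cofinite_eq_atTop ▸ Filter.eventually_ge_atTop n)
    filter_upwards [this] with N hN v
    have hv : v = Sum.elim ![v (.inl 0), v (.inl 1), v (.inl 2)] fun j => v (.inr j) := by
      funext i
      rcases i with i | j
      · fin_cases i <;> rfl
      · rfl
    rw [hv]
    exact (hP _ _ _ _ _).2 (hn _ _ N hN (D.isTree N) _ _ _ _)
  have key0 : ∀ (P : ∀ {K : Type}, BracketOps K m → K → K → K → (Fin m → K) → Prop)
      (χ : (BL).Formula (Fin 3 ⊕ Fin m)),
      (∀ (K : Type) [(BL).Structure K] (x y z : K) (e : Fin m → K),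
        χ.Realize (Sum.elim ![x, y, z] e) ↔ P (bracketOps L' φ K) x y z e) →
      (∀ (K : Type) (B : BracketOps K m) (N : ℕ), B.IsTree N → ∀ x y z e, P B x y z e) →
      ∀ x y z e, P (bracketOps L' φ M) x y z e :=
    fun P χ hP h => key P χ hP ⟨0, fun K B N _ => h K B N⟩
  have a : M := Classical.arbitrary M
  have e₀ : Fin m → M := fun _ => a
  constructor
  · refine fun x y z => key0 (fun B x y z _ => B.app (B.app x y) z = B.app x (B.app y z))
      (Term.equal (tapp (tapp tx ty) tz) (tapp tx (tapp ty tz))) (fun K _ x y z e => ?_)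
      (fun _ _ _ h x y z _ => h.app_assoc x y z) x y z e₀
    simp only [Formula.realize_equal, realize_app φ]
    rfl
  · refine fun x => key0 (fun B x _ _ _ => B.Sat x B.nil)
      (fsat tx tnil) (fun K _ x y z e => ?_)
      (fun _ _ _ h x _ _ _ => h.sat_nil x) x a a e₀
    simp only [realize_nil φ, realize_sat φ]
    rfl
  · refine fun x y z => key0 (fun B x y z _ => B.Sat x (B.app y z) ↔ B.Sat x y ∧ B.Sat x z)
      (Formula.iff (fsat tx (tapp ty tz)) (fsat tx ty ⊓ fsat tx tz)) (fun K _ x y z e => ?_)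
      (fun _ _ _ h x y z _ => h.sat_app x y z) x y z e₀
    simp only [Formula.realize_inf, Formula.realize_iff, realize_app φ, realize_sat φ]
    rfl
  · refine key0 (fun B _ _ _ _ => B.Small 0 B.nil)
      (fsmall 0 tnil) (fun K _ x y z e => ?_)
      (fun _ _ _ h _ _ _ _ => h.small_nil) a a a e₀
    simp only [realize_nil φ, realize_small φ]
  · refine fun k x y => key0 (fun B x y _ _ => B.Small 1 x → B.Small k y →
        B.Small (k + 1) (B.app x y))
      ((fsmall 1 tx).imp ((fsmall k ty).imp (fsmall (k + 1) (tapp tx ty)))) (fun K _ x y z e => ?_)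
      (fun _ _ _ h x y _ _ => h.small_app k x y) x y a e₀
    simp only [Formula.realize_imp, realize_app φ, realize_small φ]
    rfl
  · refine fun k x => key0 (fun B x _ _ _ => B.Small k x → B.Small k (B.app B.nil x))
      ((fsmall k tx).imp (fsmall k (tapp tnil tx))) (fun K _ x y z e => ?_)
      (fun _ _ _ h x _ _ _ => h.small_nil_app k x) x a a e₀
    simp only [Formula.realize_imp, realize_nil φ, realize_app φ, realize_small φ]
    rfl
  · refine fun k _ x y => key (fun B x y _ _ => B.Small k y → B.Sat x y → B.Con y)
      ((fsmall k ty).imp ((fsat tx ty).imp (fcon ty))) (fun K _ x y z e => ?_)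
      ⟨k, fun _ _ _ hN h x y _ _ => h.con_of_small k (by exact_mod_cast hN) x y⟩ x y a e₀
    simp only [Formula.realize_imp, realize_con φ, realize_small φ, realize_sat φ]
    rfl
  · refine fun x => key0 (fun B x _ _ _ => B.Con x → B.Sat (B.wit x) x)
      ((fcon tx).imp (fsat (twit tx) tx)) (fun K _ x y z e => ?_)
      (fun _ _ _ h x _ _ _ => h.sat_wit x) x a a e₀
    simp only [Formula.realize_imp, realize_wit φ, realize_con φ, realize_sat φ]
    rfl
  · refine fun x => key0 (fun B x _ _ _ => B.Pre x x)
      (fpre tx tx) (fun K _ x y z e => ?_)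
      (fun _ _ _ h x _ _ _ => h.pre_refl x) x a a e₀
    simp only [realize_pre φ]
    rfl
  · refine fun x y z => key0 (fun B x y z _ => B.Pre x y → B.Pre y z → B.Pre x z)
      ((fpre tx ty).imp ((fpre ty tz).imp (fpre tx tz))) (fun K _ x y z e => ?_)
      (fun _ _ _ h x y z _ => h.pre_trans x y z) x y z e₀
    simp only [Formula.realize_imp, realize_pre φ]
    rfl
  · refine fun x y => key0 (fun B x y _ _ => B.Pre x (B.app x y))
      (fpre tx (tapp tx ty)) (fun K _ x y z e => ?_)
      (fun _ _ _ h x y _ _ => h.pre_app x y) x y a e₀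
    simp only [realize_app φ, realize_pre φ]
    rfl
  · refine fun x y z => key0 (fun B x y z _ => B.Pre x y → B.Con (B.app y z) → B.Con (B.app x z))
      ((fpre tx ty).imp ((fcon (tapp ty tz)).imp (fcon (tapp tx tz)))) (fun K _ x y z e => ?_)
      (fun _ _ _ h x y z _ => h.con_of_pre x y z) x y z e₀
    simp only [Formula.realize_imp, realize_app φ, realize_con φ, realize_pre φ]
    rfl
  · refine fun x y z => key0 (fun B x y z _ => B.Pre x y → B.Sat z y → B.Sat z x)
      ((fpre tx ty).imp ((fsat tz ty).imp (fsat tz tx))) (fun K _ x y z e => ?_)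
      (fun _ _ _ h x y z _ => h.sat_of_pre x y z) x y z e₀
    simp only [Formula.realize_imp, realize_pre φ, realize_sat φ]
    rfl
  · refine fun x y => key0 (fun B x y _ _ => B.Pre x y → ¬ B.Pre y x → B.Edge (B.opn x) (B.opn y))
      ((fpre tx ty).imp ((fpre ty tx).not.imp (edgeFormula φ (topn tx) (topn ty))))
          (fun K _ x y z e => ?_)
      (fun _ _ _ h x y _ _ => h.edge_opn x y) x y a e₀
    simp only [Formula.realize_imp, Formula.realize_not, realize_opn φ, realize_pre φ,
      realize_edge φ]
    rfl
  · refine fun x y => key0 (fun B x y _ _ => B.Pre x y ∨ B.Pre y x → B.Edge (B.opn x) (B.cls y))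
      (Formula.imp (fpre tx ty ⊔ fpre ty tx) (edgeFormula φ (topn tx) (tcls ty)))
          (fun K _ x y z e => ?_)
      (fun _ _ _ h x y _ _ => h.edge_cls x y) x y a e₀
    simp only [Formula.realize_imp, Formula.realize_sup, realize_opn φ, realize_cls φ,
      realize_pre φ, realize_edge φ]
    rfl
  · refine fun x y e => key0 (fun B x y _ e => B.Con (B.app x y) → B.Edge (B.opn x) e →
        B.Edge e (B.cls x) → B.Pre x (B.bound e))
      ((fcon (tapp tx ty)).imp ((edgeFormula φ (topn tx) te).imp
        ((edgeFormula φ te (tcls tx)).imp (fpre tx tbound)))) (fun K _ x y z e => ?_)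
      (fun _ _ _ h x y _ e => h.pre_bound x y e) x y a e
    simp only [Formula.realize_imp, realize_app φ, realize_opn φ, realize_cls φ, realize_bound φ,
      realize_con φ, realize_pre φ, realize_edge φ]
    rfl
  · refine fun x y z => key0 (fun B x y z _ => B.Pre x y → B.Con (B.app x z) →
        B.Pre x (B.top y z) ∧ B.Con (B.app (B.top y z) z) ∧ B.Pre (B.top y z) y)
      ((fpre tx ty).imp ((fcon (tapp tx tz)).imp
        (fpre tx (ttop ty tz) ⊓ (fcon (tapp (ttop ty tz) tz) ⊓ fpre (ttop ty tz) ty))))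
            (fun K _ x y z e => ?_)
      (fun _ _ _ h x y z _ => h.top_spec x y z) x y z e₀
    simp only [Formula.realize_imp, Formula.realize_inf, realize_app φ, realize_top φ,
      realize_con φ, realize_pre φ]
    rfl
  · refine fun x y e => key0 (fun B x y _ e => B.Pre x y → B.Edge (B.opn x) e → B.Pre x (B.cut y e))
      ((fpre tx ty).imp ((edgeFormula φ (topn tx) te).imp (fpre tx (tcut ty))))
          (fun K _ x y z e => ?_)
      (fun _ _ _ h x y _ e => h.pre_cut x y e) x y a e
    simp only [Formula.realize_imp, realize_opn φ, realize_cut φ, realize_pre φ, realize_edge φ]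
    rfl
  · refine fun x y z e => key0 (fun B x y z e => B.Pre x y → B.Edge (B.opn x) e → B.Pre z y →
        B.Edge e (B.opn z) →
        B.Pre (B.cut y e) z)
      ((fpre tx ty).imp ((edgeFormula φ (topn tx) te).imp ((fpre tz ty).imp
        ((edgeFormula φ te (topn tz)).imp (fpre (tcut ty) tz))))) (fun K _ x y z e => ?_)
      (fun _ _ _ h x y z e => h.cut_pre x y z e) x y z e
    simp only [Formula.realize_imp, realize_opn φ, realize_cut φ, realize_pre φ, realize_edge φ]
    rfl

end Models

theorem interpretsIn_of_isQuotient {L₁ : FirstOrder.Language.{0, 0}} {U : L₁.Theory}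
    (ι : L₁ →ᴸ bracketLang L' L m) (ρ : (bracketLang L' L m).Functions 1)
    (hU : ∀ (D : BracketData T' T φ) (N : ℕ), ∃ (B : Theory.ModelType.{0, 0, 0} U)
      (p : D.Carrier N → B), IsQuotient ι ρ p ∧ ∀ x, p (Structure.funMap ρ ![x]) = p x) :
    (quotientInterpretation ι ρ).InterpretsIn (bracketTheory T' T φ) U := by
  intro M
  have hM : (M : Type) ⊨ bracketTheory T' T φ := M.is_model
  obtain ⟨N, S, h, hq⟩ := exists_isQuotient ι ρ M (by
      intro n R f
      have := realize_of_bracketData hM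
        (Formula.iff ((ι.onRelation R).formula fun i => Term.var i)
          ((ι.onRelation R).formula fun i => ρ.apply₁ (Term.var i)))
        (fun D => .of_forall fun N v => by
          obtain ⟨B, p, hp, hρ⟩ := hU D N
          simp only [Formula.realize_iff, Formula.realize_rel, Term.realize_functions_apply₁,
            Term.realize_var, ← hp.relMap_iff, hρ]) f
      simpa only [Formula.realize_iff, Formula.realize_rel, Term.realize_functions_apply₁,
        Term.realize_var] using this) (by
      intro n F f
      have := realize_of_bracketData hM
        (Term.equal (ρ.apply₁ (.func (ι.onFunction F) Term.var))
          (ρ.apply₁ (.func (ι.onFunction F) fun i => ρ.apply₁ (Term.var i))))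
        (fun D => .of_forall fun N v => by
          obtain ⟨B, p, hp, hρ⟩ := hU D N
          simp only [Formula.realize_equal, Term.realize_functions_apply₁, Term.realize,
            ← hp.eq_iff, hp.map_fun, hρ]) f
      simpa only [Formula.realize_equal, Term.realize_functions_apply₁, Term.realize]
        using this)
  have hN : N ⊨ U := by
    refine ⟨fun σ hσ => (hq.realize_sentence σ).1 (hM.realize_of_mem _ fun D => ?_)⟩
    refine .of_forall fun n => ?_
    obtain ⟨B, p, hp, -⟩ := hU D n
    exact (hp.realize_sentence σ).2 (B.is_model.realize_of_mem σ hσ)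
  have : Nonempty N := (inferInstance : Nonempty M).map h
  exact ⟨Theory.ModelType.of U N, fun a => h (a.1 (0 : Fin 1)),
    (represents_iff_isQuotient _).2 hq⟩

theorem interpretsIn_left :
    (quotientInterpretation (leftHom L' L m) (repLeft L' L m)).InterpretsIn
      (bracketTheory T' T φ) T' :=
  interpretsIn_of_isQuotient _ _ fun D N => ⟨D.left, _, D.isQuotient_left N, fun _ => rfl⟩

theorem interpretsIn_right :
    (quotientInterpretation (rightHom L' L m) (repRight L' L m)).InterpretsIn
      (bracketTheory T' T φ) T :=
  interpretsIn_of_isQuotient _ _ fun D N => ⟨D.right, _, D.isQuotient_right N, fun _ => rfl⟩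

theorem jointModels_bracketTheory (hcomp : T.IsComplete)
    (hD : ∀ A : Theory.ModelType.{0, 0, 0} T', ∃ D : BracketData T' T φ, D.left = A) :
    JointModels (bracketTheory T' T φ) T' T
      (quotientInterpretation (leftHom L' L m) (repLeft L' L m))
      (quotientInterpretation (rightHom L' L m) (repRight L' L m)) := by
  intro A₁ A₂
  obtain ⟨D, rfl⟩ := hD A₁
  let K := (Filter.hyperfilter ℕ : Filter ℕ).Product fun N => D.Carrier N
  have hK : ∀ σ : (bracketLang L' L m).Sentence,
      K ⊨ σ ↔ ∀ᶠ N in Filter.hyperfilter ℕ, D.Carrier N ⊨ σ :=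
    fun σ => Ultraproduct.sentence_realize σ
  have hKT : K ⊨ bracketTheory T' T φ := ⟨fun σ hσ => (hK σ).2 (hσ D)⟩
  let M := Theory.ModelType.of (bracketTheory T' T φ) K
  obtain ⟨N₁, g₁, h₁⟩ := interpretsIn_left (L' := L') (L := L) (m := m) M
  obtain ⟨N₂, g₂, h₂⟩ := interpretsIn_right (L' := L') (L := L) (m := m) M
  refine ⟨M, N₁, g₁, N₂, g₂, h₁, h₂, ?_, ?_⟩
  · rw [elementarilyEquivalent_iff]
    intro σ
    have hσ : K ⊨ (translate (leftHom L' L m) (repLeft L' L m) σ : Sentence _) ↔ D.left ⊨ σ :=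
      (hK _).trans ((Filter.eventually_congr (.of_forall fun N =>
        (D.isQuotient_left N).realize_sentence σ)).trans Filter.eventually_const)
    exact (((represents_iff_isQuotient _).1 h₁).realize_sentence σ).symm.trans hσ
  · exact hcomp.models_elementarily_equivalent N₂ A₂

end BracketTheory

section Transfer

variable {L' L : FirstOrder.Language.{0, 0}} {m : ℕ} {T' : L'.Theory} {T : L.Theory}
  {φ : L.Formula (Fin m ⊕ Fin m)}

theorem mk_formula_le (L : FirstOrder.Language.{0, 0}) (α : Type) :
    #(L.Formula α) ≤ max ℵ₀ (#α + L.card) := by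
  have h := BoundedFormula.card_le (L := L) (α := α)
  simp only [lift_id] at h
  refine le_trans ?_ h
  exact mk_le_of_injective (f := fun ψ : L.Formula α => (⟨0, ψ⟩ : Σ n, L.BoundedFormula α n))
    fun _ _ h => eq_of_heq (Sigma.mk.inj h).2

theorem ParamFormula.mk_lt {N : Type} [L.Structure N] {n : ℕ} {lam : Cardinal.{0}} (hlam : ℵ₀ < lam)
    (hL : L.card < lam) {A : Set N} (hA : #A < lam) {p : Set (ParamFormula L N n)}
    (hpA : ∀ ψ ∈ p, ∀ j, ψ.par j ∈ A) : #p < lam := by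
  let c : Cardinal.{0} := max (max ℵ₀ L.card) #A
  have hc : ℵ₀ ≤ c := (le_max_left _ _).trans (le_max_left _ _)
  have hinj : #p ≤ #(Σ k : ℕ, L.Formula (Fin n ⊕ Fin k) × (Fin k → A)) := by
    refine mk_le_of_injective
      (f := fun ψ : p => ⟨ψ.1.k, ψ.1.toFormula, fun j => ⟨ψ.1.par j, hpA _ ψ.2 j⟩⟩) ?_
    rintro ⟨⟨k, ψ, a⟩, hψ⟩ ⟨⟨k', ψ', a'⟩, hψ'⟩ h
    simp only [Sigma.mk.injEq] at h
    obtain ⟨rfl, h⟩ := h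
    simp only [heq_eq_eq, Prod.mk.injEq] at h
    obtain ⟨rfl, h⟩ := h
    have : a = a' := funext fun j => congrArg Subtype.val (congrFun h j)
    subst this
    rfl
  have hk : ∀ k : ℕ, #(L.Formula (Fin n ⊕ Fin k) × (Fin k → A)) ≤ c := by
    intro k
    rw [mk_prod, lift_id, lift_id]
    refine mul_le_of_le hc ?_ ?_
    · refine (mk_formula_le _ _).trans (max_le hc (add_le_of_le hc ?_ ?_))
      · exact mk_le_aleph0.trans hc
      · exact (le_max_right _ _).trans (le_max_left _ _)
    · rw [mk_arrow, lift_id, lift_id, mk_fin, power_natCast]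
      exact (pow_le_pow_left' (le_max_right _ _) k).trans (power_nat_le hc)
  refine (hinj.trans ?_).trans_lt (max_lt (max_lt hlam hL) hA : c < lam)
  rw [mk_sigma]
  refine (sum_le_sum _ _ hk).trans ?_
  rw [sum_const, lift_id, lift_id, mk_nat]
  exact mul_le_of_le hc hc le_rfl

theorem transferClause_bracketTheory {lam : Cardinal.{0}} (hlam : ℵ₀ < lam) (hL : L'.card < lam) :
    TransferClause (bracketTheory T' T φ)
      (quotientInterpretation (leftHom L' L m) (repLeft L' L m))
      (quotientInterpretation (rightHom L' L m) (repRight L' L m)) lam lam 0 := by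
  classical
  intro M _ N₁ S₁ g₁ N₂ S₂ g₂ h₁ h₂ hs A hA p hpA hp
  have hM : (M : Type) ⊨ bracketTheory T' T φ := M.is_model
  have hq₁ := (represents_iff_isQuotient _).1 h₁
  have hq₂ := (represents_iff_isQuotient _).1 h₂
  set f₁ := fun x : M => g₁ (toDom (leftHom L' L m) (repLeft L' L m) x)
  set f₂ := fun x : M => g₂ (toDom (rightHom L' L m) (repRight L' L m) x)
  let B := bracketOps L' φ M
  have hB : B.IsTree ⊤ := isTree_of_models hM
  have hedge : ∀ a b : Fin m → M, B.Edge a b ↔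
      φ.Realize (Sum.elim (fun i => f₂ (a i)) fun i => f₂ (b i)) := by
    intro a b
    refine (hq₂.realize_formula φ _).trans (iff_of_eq (congrArg _ ?_))
    funext i
    cases i <;> rfl
  have hfill : B.Fills lam := by
    intro I J hI hJ a b hfin
    obtain ⟨x, hx, hx'⟩ := hs.exists_between hlam.le φ hI hJ (fun i j => f₂ (a i j))
      (fun i j => f₂ (b i j)) (by
        intro s t
        obtain ⟨x, hx, hx'⟩ := hfin s t
        exact ⟨fun i => f₂ (x i), fun i hi => (hedge _ _).1 (hx i hi),
          fun j hj => (hedge _ _).1 (hx' j hj)⟩)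
    choose y hy using fun i => hq₂.surjective (x i)
    obtain rfl : (fun i => f₂ (y i)) = x := funext hy
    exact ⟨y, fun i => (hedge _ _).2 (hx i), fun j => (hedge _ _).2 (hx' j)⟩
  let l : N₁ → M := Function.surjInv hq₁.surjective
  have hl : ∀ a, f₁ (l a) = a := Function.surjInv_eq hq₁.surjective
  let q : p → M := fun ψ => Structure.funMap (L := bracketLang L' L m)
    (BracketFun.code ψ.1.toFormula) fun j => l (ψ.1.par j)
  have hsmall : ∀ ψ, B.Small 1 (q ψ) := by
    intro ψ
    exact (realize_small φ _ _ _ _).1 (realize_of_bracketData hM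
      (Relations.formula₁ (L := bracketLang L' L m) (BracketRel.small 1)
        (.func (BracketFun.code ψ.1.toFormula) Term.var))
      (fun D => .of_forall fun N v => (realize_small φ _ _ _ _).2 (Nat.le_refl 1))
      fun j => l (ψ.1.par j))
  have hsat : ∀ (x : M) ψ, B.Sat x (q ψ) ↔ ψ.1.Realize fun _ => f₁ x := by
    intro x ψ
    have := realize_of_bracketData hM
      (Formula.iff (Relations.formula₂ (L := bracketLang L' L m) BracketRel.sat
        (Term.var (Sum.inl 0))
        (.func (BracketFun.code ψ.1.toFormula) fun j => Term.var (Sum.inr j)))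
        (translate (leftHom L' L m) (repLeft L' L m) ψ.1.toFormula))
      (fun D => .of_forall fun N v => by
        rw [Formula.realize_iff, realize_sat φ, (D.isQuotient_left N).realize_formula]
        have hv : (fun i => (v i).1) =
            Sum.elim (fun _ => (v (.inl 0)).1) fun j => (v (.inr j)).1 := by
          funext i
          rcases i with i | j
          · rw [Subsingleton.elim i 0]
            rfl
          · rfl
        rw [hv]
        exact List.forall_mem_singleton) (Sum.elim (fun _ => x) fun j => l (ψ.1.par j))
    rw [Formula.realize_iff, realize_sat φ, hq₁.realize_formula] at this
    refine this.trans (iff_of_eq (congrArg ψ.1.toFormula.Realize ?_))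
    funext i
    rcases i with i | j
    · rfl
    · exact hl _
  obtain ⟨x, hx⟩ := hB.exists_sat hlam hfill (ParamFormula.mk_lt hlam hL hA hpA) hsmall (by
    intro s
    obtain ⟨e, he⟩ := hp (s.map Subtype.val).toFinset (by
      intro ψ hψ
      obtain ⟨ψ, -, rfl⟩ := List.mem_map.1 (List.mem_toFinset.1 hψ)
      exact ψ.2)
    refine ⟨l (e 0), fun ψ hψ => (hsat _ _).2 ?_⟩
    rw [hl]
    convert he ψ.1 (List.mem_toFinset.2 (List.mem_map_of_mem hψ)) using 2
    rw [Subsingleton.elim (0 : Fin 1)])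
  exact ⟨fun _ => f₁ x, fun ψ hψ => (hsat x ⟨ψ, hψ⟩).1 (hx ⟨ψ, hψ⟩)⟩

end Transfer

section Cardinality

variable {L' L : FirstOrder.Language.{0, 0}} {m : ℕ}

theorem card_bracketLang_le {c : Cardinal.{0}} (hc : ℵ₀ ≤ c) (hL' : L'.card ≤ c) (hL : L.card ≤ c) :
    (bracketLang L' L m).card ≤ c := by
  have hinl : ∀ K : FirstOrder.Language.{0, 0}, #(Σ n, K.Functions n) ≤ K.card :=
    fun K => mk_le_of_injective Sum.inl_injective
  have hinr : ∀ K : FirstOrder.Language.{0, 0}, #(Σ n, K.Relations n) ≤ K.card :=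
    fun K => mk_le_of_injective Sum.inr_injective
  have hsum : ∀ {α β : Type}, #α ≤ c → #β ≤ c → #(α ⊕ β) ≤ c := by
    intro α β hα hβ
    rw [mk_sum, lift_id, lift_id]
    exact add_le_of_le hc hα hβ
  have hcode : #(Σ k : ℕ, L'.Formula (Fin 1 ⊕ Fin k)) ≤ c := by
    rw [mk_sigma]
    refine (sum_le_sum _ (fun _ => c) fun k => (mk_formula_le _ _).trans
      (max_le hc (add_le_of_le hc (mk_le_aleph0.trans hc) hL'))).trans ?_
    rw [sum_const, lift_id, lift_id, mk_nat]
    exact mul_le_of_le hc hc le_rfl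
  refine hsum ?_ ?_
  · let F : (Σ n, L'.Functions n) ⊕ (Σ n, L.Functions n) ⊕
        (Σ k : ℕ, L'.Formula (Fin 1 ⊕ Fin k)) ⊕ (Fin m ⊕ Fin m) ⊕ Fin 8 →
        Σ n, (bracketLang L' L m).Functions n :=
      Sum.elim (fun G => ⟨_, .left G.2⟩) <| Sum.elim (fun G => ⟨_, .right G.2⟩) <|
        Sum.elim (fun ψ => ⟨_, .code ψ.2⟩) <|
        Sum.elim (Sum.elim (fun j => ⟨_, .opn j⟩) fun j => ⟨_, .cls j⟩)
        ![⟨_, .repLeft⟩, ⟨_, .repRight⟩, ⟨_, .nil⟩, ⟨_, .app⟩, ⟨_, .bound⟩, ⟨_, .cut⟩,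
          ⟨_, .top⟩, ⟨_, .wit⟩]
    have hF : Function.Surjective F := by
      rintro ⟨_, G | G | ψ | _ | _ | _ | _ | j | j | _ | _ | _ | _⟩
      · exact ⟨.inl ⟨_, G⟩, rfl⟩
      · exact ⟨.inr (.inl ⟨_, G⟩), rfl⟩
      · exact ⟨.inr (.inr (.inl ⟨_, ψ⟩)), rfl⟩
      · exact ⟨.inr (.inr (.inr (.inr 0))), rfl⟩
      · exact ⟨.inr (.inr (.inr (.inr 1))), rfl⟩
      · exact ⟨.inr (.inr (.inr (.inr 2))), rfl⟩
      · exact ⟨.inr (.inr (.inr (.inr 3))), rfl⟩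
      · exact ⟨.inr (.inr (.inr (.inl (.inl j)))), rfl⟩
      · exact ⟨.inr (.inr (.inr (.inl (.inr j)))), rfl⟩
      · exact ⟨.inr (.inr (.inr (.inr 4))), rfl⟩
      · exact ⟨.inr (.inr (.inr (.inr 5))), rfl⟩
      · exact ⟨.inr (.inr (.inr (.inr 6))), rfl⟩
      · exact ⟨.inr (.inr (.inr (.inr 7))), rfl⟩
    exact (mk_le_of_surjective hF).trans (hsum ((hinl L').trans hL') (hsum ((hinl L).trans hL)
      (hsum hcode (mk_le_aleph0.trans hc))))
  · let F : (Σ n, L'.Relations n) ⊕ (Σ n, L.Relations n) ⊕ ℕ ⊕ Fin 3 →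
        Σ n, (bracketLang L' L m).Relations n :=
      Sum.elim (fun R => ⟨_, .left R.2⟩) <| Sum.elim (fun R => ⟨_, .right R.2⟩) <|
        Sum.elim (fun k => ⟨_, .small k⟩) ![⟨_, .con⟩, ⟨_, .pre⟩, ⟨_, .sat⟩]
    have hF : Function.Surjective F := by
      rintro ⟨_, R | R | _ | k | _ | _⟩
      · exact ⟨.inl ⟨_, R⟩, rfl⟩
      · exact ⟨.inr (.inl ⟨_, R⟩), rfl⟩
      · exact ⟨.inr (.inr (.inr 0)), rfl⟩
      · exact ⟨.inr (.inr (.inl k)), rfl⟩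
      · exact ⟨.inr (.inr (.inr 1)), rfl⟩
      · exact ⟨.inr (.inr (.inr 2)), rfl⟩
    exact (mk_le_of_surjective hF).trans (hsum ((hinr L').trans hL') (hsum ((hinr L).trans hL)
      (mk_le_aleph0.trans hc)))

theorem card_le_theoryCard {K : FirstOrder.Language.{0, 0}} (U : K.Theory) :
    K.card ≤ theoryCard U :=
  (self_le_add_right _ _).trans (self_le_add_right _ _)

theorem theoryCard_bracketTheory_le {T' : L'.Theory} {T : L.Theory}
    {φ : L.Formula (Fin m ⊕ Fin m)} :
    theoryCard (bracketTheory T' T φ) ≤ theoryCard T' + theoryCard T := by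
  have hc : ℵ₀ ≤ theoryCard T' + theoryCard T :=
    (self_le_add_left _ _).trans (self_le_add_right _ _)
  have hcard : (bracketLang L' L m).card ≤ theoryCard T' + theoryCard T :=
    card_bracketLang_le hc ((card_le_theoryCard T').trans (self_le_add_right _ _))
      ((card_le_theoryCard T).trans (self_le_add_left _ _))
  refine add_le_of_le hc (add_le_of_le hc hcard ((mk_subtype_le _).trans ?_)) hc
  exact (mk_formula_le _ _).trans
    (max_le hc (add_le_of_le hc (mk_le_aleph0.trans hc) hcard))

end Cardinality

theorem ExemplifiesSOP3.exists_bracketData {L' L : FirstOrder.Language.{0, 0}} {T' : L'.Theory}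
    {T : L.Theory} {𝓜 : Theory.ModelType.{0, 0, 0} T} {m : ℕ} {φ : L.Formula (Fin m ⊕ Fin m)}
    (hsop : ExemplifiesSOP3 φ 𝓜) (A : Theory.ModelType.{0, 0, 0} T') :
    ∃ D : BracketData T' T φ, D.left = A := by
  classical
  let o : LinearOrder (UnaryPred A) := linearOrderOfSTO WellOrderingRel
  obtain ⟨B, F, hF, hcyc⟩ := hsop.exists_chain (List (WithTop (UnaryPred A)))
  exact ⟨⟨A, o, B, F, hF, hcyc⟩, rfl⟩

/-- If `T` is a complete first-order theory with `|T| < λ` and `T` has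
SOP₃ (exemplified by some formula in some model of `T`), then `T` is `⊲*_λ`-maximal. -/
theorem triangleStarMaximal_of_SOP3 {L : FirstOrder.Language.{0, 0}} (T : L.Theory)
    (hcomp : T.IsComplete) (𝓜 : Theory.ModelType.{0, 0, 0} T) {m : ℕ}
    (φ : L.Formula (Fin m ⊕ Fin m)) (hsop : ExemplifiesSOP3 φ 𝓜)
    (lam : Cardinal.{0}) (hT : theoryCard T < lam) :
    TriangleStarMaximal T lam := by
  intro L' T' hT'
  have hlam : ℵ₀ < lam :=
    (lt_of_le_of_lt (self_le_add_left _ _) hT)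
  exact ⟨_, bracketTheory T' T φ, _, _, theoryCard_bracketTheory_le, interpretsIn_left,
    interpretsIn_right, jointModels_bracketTheory hcomp hsop.exists_bracketData,
    transferClause_bracketTheory hlam ((card_le_theoryCard T').trans_lt hT')⟩

end SopPaper
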